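/- arXiv:2108.01024 — 4 statements merged into one kernel-verified Lean document; each statement's English description precedes it below -/
import Mathlib

section
/- For every prime power q, the number of strong realizations of the hyperfiguration h_2 in P^3(F_q) is A_{h_2}(4,q) = a(q) · |PGL_4(F_q)|, where a(q) = 1 if q is even and a(q) = 0 if q is odd. In particular there are no such realizations when q is odd. -/
open scoped LinearAlgebra.Projectivization

/-- Three points of `ℙ³(F_q)` are collinear if vector representatives of them span a
subspace of `F_q^4` of dimension at most 2. -/
def Collinear3 (F : Type) [Field F] (x y z : ℙ F (Fin 4 → F)) : Prop :=
  Module.finrank F ↥(x.submodule ⊔ y.submodule ⊔ z.submodule) ≤ 2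

/-- Four points of `ℙ³(F_q)` are coplanar if vector representatives of them span a
subspace of `F_q^4` of dimension at most 3. -/
def Coplanar4 (F : Type) [Field F] (x y z w : ℙ F (Fin 4 → F)) : Prop :=
  Module.finrank F ↥(x.submodule ⊔ y.submodule ⊔ z.submodule ⊔ w.submodule) ≤ 3

/-- A strong realization in `ℙ³(F_q)` of a configuration on points `{0,…,6}` given by a
list of planes and a list of lines: an injective map `σ` such that a triple of image points
is collinear iff its index set is contained in a listed line, and four image points are
coplanar iff their index set is contained in a listed plane. -/
def IsConfigReal (F : Type) [Field F] (planes lines : Finset (Finset (Fin 7)))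
    (σ : Fin 7 → ℙ F (Fin 4 → F)) : Prop :=
  Function.Injective σ ∧
    (∀ a b c : Fin 7, a ≠ b → a ≠ c → b ≠ c →
      (Collinear3 F (σ a) (σ b) (σ c) ↔ ∃ l ∈ lines, ({a, b, c} : Finset (Fin 7)) ⊆ l)) ∧
    (∀ a b c d : Fin 7, a ≠ b → a ≠ c → a ≠ d → b ≠ c → b ≠ d → c ≠ d →
      (Coplanar4 F (σ a) (σ b) (σ c) (σ d) ↔
        ∃ h ∈ planes, ({a, b, c, d} : Finset (Fin 7)) ⊆ h))

/-- Planes of the hyperfiguration `h₁`. -/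
def h1planes : Finset (Finset (Fin 7)) :=
  {{0, 1, 2, 3}, {0, 1, 4, 5}, {0, 2, 4, 6}, {1, 2, 5, 6}, {1, 3, 4, 6}, {2, 3, 4, 5}}

/-- Planes of the hyperfiguration `h₂` (the complement of the Fano plane). -/
def h2planes : Finset (Finset (Fin 7)) :=
  {{0, 1, 2, 3}, {0, 1, 4, 5}, {0, 2, 4, 6}, {0, 3, 5, 6}, {1, 2, 5, 6}, {1, 3, 4, 6},
    {2, 3, 4, 5}}

/-- Planes of the hyperfiguration `h₃`. -/
def h3planes : Finset (Finset (Fin 7)) :=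
  {{0, 1, 2, 3}, {0, 1, 2, 4}, {0, 1, 2, 5}, {0, 1, 2, 6}, {0, 3, 4, 5}, {1, 3, 4, 6},
    {2, 3, 5, 6}}

/-- Lines of the hyperfiguration `h₃`. -/
def h3lines : Finset (Finset (Fin 7)) := {{0, 1, 2}}

/-- Planes of the hyperfiguration `h₅`. -/
def h5planes : Finset (Finset (Fin 7)) :=
  {{0, 1, 2, 3, 4}, {0, 1, 2, 3, 5}, {0, 1, 2, 3, 6}, {0, 4, 5, 6}, {1, 4, 5, 6},
    {2, 4, 5, 6}, {3, 4, 5, 6}}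

/-- Lines of the hyperfiguration `h₅`. -/
def h5lines : Finset (Finset (Fin 7)) := {{0, 1, 2, 3}, {4, 5, 6}}

lemma aux_coplanar (F : Type) [Field F] (v : Fin 4 → Fin 4 → F) (hv : ∀ i, v i ≠ 0) :
    Coplanar4 F (.mk F (v 0) (hv 0)) (.mk F (v 1) (hv 1)) (.mk F (v 2) (hv 2))
      (.mk F (v 3) (hv 3)) ↔ Matrix.det (Matrix.of v) = 0 := by
  unfold Coplanar4
  have h1 : (Projectivization.mk F (v 0) (hv 0)).submodule ⊔
      (Projectivization.mk F (v 1) (hv 1)).submodule ⊔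
      (Projectivization.mk F (v 2) (hv 2)).submodule ⊔
      (Projectivization.mk F (v 3) (hv 3)).submodule = Submodule.span F (Set.range v) := by
    simp only [Projectivization.submodule_mk, ← Submodule.span_union]
    congr 1
    ext x
    simp [Fin.exists_fin_succ, eq_comm]
    tauto
  rw [h1]
  have h2 := linearIndependent_iff_card_eq_finrank_span (R := F) (b := v)
  have h3 := Matrix.linearIndependent_rows_iff_isUnit (A := Matrix.of v)
  rw [Matrix.isUnit_iff_isUnit_det, isUnit_iff_ne_zero] at h3
  have h4 : (Set.range v).finrank F ≤ 4 := by
    have := finrank_range_le_card (R := F) v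
    simpa using this
  have h5 : (Matrix.of v).row = v := rfl
  rw [h5, h2] at h3
  simp only [Fintype.card_fin, Set.finrank] at h3 h4
  constructor
  · intro h
    by_contra hd
    have := h3.2 hd
    omega
  · intro h
    by_contra hd
    exact h3.1 (by omega) h

lemma aux_coplanar' (F : Type) [Field F] (p : Fin 7 → ℙ F (Fin 4 → F))
    (v : Fin 7 → Fin 4 → F) (hv : ∀ i, v i ≠ 0) (hp : ∀ i, p i = .mk F (v i) (hv i))
    (a b c d : Fin 7) :
    Coplanar4 F (p a) (p b) (p c) (p d) ↔ Matrix.det (Matrix.of ![v a, v b, v c, v d]) = 0 := by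
  rw [hp, hp, hp, hp]
  exact aux_coplanar F ![v a, v b, v c, v d] (by intro i; fin_cases i <;> simp [hv])

/-- The seven odd-weight model vectors. -/
def modelVec (R : Type) [CommRing R] : Fin 7 → Fin 4 → R :=
  ![![1,0,0,0],![0,1,0,0],![0,0,1,0],![1,1,1,0],![0,0,0,1],![1,1,0,1],![1,0,1,1]]

lemma det4 {R : Type} [CommRing R] (a b c d : Fin 4 → R) :
    Matrix.det (Matrix.of ![a, b, c, d]) =
      a 0 * (b 1 * (c 2 * d 3 - c 3 * d 2) - b 2 * (c 1 * d 3 - c 3 * d 1)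
        + b 3 * (c 1 * d 2 - c 2 * d 1))
      - a 1 * (b 0 * (c 2 * d 3 - c 3 * d 2) - b 2 * (c 0 * d 3 - c 3 * d 0)
        + b 3 * (c 0 * d 2 - c 2 * d 0))
      + a 2 * (b 0 * (c 1 * d 3 - c 3 * d 1) - b 1 * (c 0 * d 3 - c 3 * d 0)
        + b 3 * (c 0 * d 1 - c 1 * d 0))
      - a 3 * (b 0 * (c 1 * d 2 - c 2 * d 1) - b 1 * (c 0 * d 2 - c 2 * d 0)
        + b 2 * (c 0 * d 1 - c 1 * d 0)) := by
  simp [Matrix.det_succ_row_zero, Fin.sum_univ_succ, Fin.succAbove, Matrix.submatrix]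
  ring

lemma modelDet2 : ∀ a b c d : Fin 7, a ≠ b → a ≠ c → a ≠ d → b ≠ c → b ≠ d → c ≠ d →
    (Matrix.det (Matrix.of ![modelVec (ZMod 2) a, modelVec _ b, modelVec _ c, modelVec _ d]) = 0 ↔
      ∃ h ∈ h2planes, ({a, b, c, d} : Finset (Fin 7)) ⊆ h) := by
  simp only [det4]
  decide +kernel

lemma modelDet (F : Type) [Field F] [CharP F 2] (a b c d : Fin 7) (h1 : a ≠ b) (h2 : a ≠ c)
    (h3 : a ≠ d) (h4 : b ≠ c) (h5 : b ≠ d) (h6 : c ≠ d) :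
    (Matrix.det (Matrix.of ![modelVec F a, modelVec _ b, modelVec _ c, modelVec _ d]) = 0 ↔
      ∃ h ∈ h2planes, ({a, b, c, d} : Finset (Fin 7)) ⊆ h) := by
  rw [← modelDet2 a b c d h1 h2 h3 h4 h5 h6]
  have key : ∀ i j, modelVec F i j = ZMod.castHom (dvd_refl 2) F (modelVec (ZMod 2) i j) := by
    intro i j
    fin_cases i <;> fin_cases j <;> simp [modelVec]
  have : Matrix.det (Matrix.of ![modelVec F a, modelVec _ b, modelVec _ c, modelVec _ d]) =
      ZMod.castHom (dvd_refl 2) F (Matrix.det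
        (Matrix.of ![modelVec (ZMod 2) a, modelVec _ b, modelVec _ c, modelVec _ d])) := by
    simp only [det4, key, map_add, map_sub, map_mul]
  rw [this, map_eq_zero_iff _ (RingHom.injective _)]

lemma exists_fourth : ∀ a b c : Fin 7, a ≠ b → a ≠ c → b ≠ c → ∃ d, a ≠ d ∧ b ≠ d ∧ c ≠ d ∧
    ¬ ∃ h ∈ h2planes, ({a, b, c, d} : Finset (Fin 7)) ⊆ h := by
  decide +kernel

lemma exists_third : ∀ a b : Fin 7, a ≠ b → ∃ c, a ≠ c ∧ b ≠ c := by
  decide +kernel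

lemma finrank_pt (F : Type) [Field F] (p : ℙ F (Fin 4 → F)) :
    Module.finrank F p.submodule = 1 := p.finrank_submodule

lemma coplanar_of_collinear (F : Type) [Field F] (x y z w : ℙ F (Fin 4 → F))
    (h : Collinear3 F x y z) : Coplanar4 F x y z w := by
  unfold Collinear3 at h
  unfold Coplanar4
  have := Submodule.finrank_add_le_finrank_add_finrank
    (x.submodule ⊔ y.submodule ⊔ z.submodule) w.submodule
  rw [finrank_pt] at this
  omega

lemma isConfig_iff (F : Type) [Field F] (σ : Fin 7 → ℙ F (Fin 4 → F)) :
    IsConfigReal F h2planes ∅ σ ↔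
    (∀ a b c d : Fin 7, a ≠ b → a ≠ c → a ≠ d → b ≠ c → b ≠ d → c ≠ d →
      (Coplanar4 F (σ a) (σ b) (σ c) (σ d) ↔
        ∃ h ∈ h2planes, ({a, b, c, d} : Finset (Fin 7)) ⊆ h)) := by
  refine ⟨fun h => h.2.2, fun h => ?_⟩
  have hc : ∀ a b c : Fin 7, a ≠ b → a ≠ c → b ≠ c → ¬ Collinear3 F (σ a) (σ b) (σ c) := by
    intro a b c h1 h2 h3 hh
    obtain ⟨d, h4, h5, h6, h7⟩ := exists_fourth a b c h1 h2 h3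
    exact h7 ((h a b c d h1 h2 h4 h3 h5 h6).1 (coplanar_of_collinear F _ _ _ _ hh))
  refine ⟨?_, ?_, h⟩
  · intro a b hab
    by_contra hne
    obtain ⟨c, h1, h2⟩ := exists_third a b hne
    apply hc a b c hne h1 h2
    unfold Collinear3
    rw [hab, sup_idem]
    have := Submodule.finrank_add_le_finrank_add_finrank (σ b).submodule (σ c).submodule
    rw [finrank_pt, finrank_pt] at this
    exact this
  · intro a b c h1 h2 h3
    simp [hc a b c h1 h2 h3]

lemma modelVec_ne (F : Type) [Field F] (i : Fin 7) : modelVec F i ≠ 0 := by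
  intro h
  have h0 := congrFun h 0
  have h1 := congrFun h 1
  have h2 := congrFun h 2
  have h3 := congrFun h 3
  fin_cases i <;> simp [modelVec] at h0 h1 h2 h3

lemma vecMul_GL_inj {F : Type} [Field F] (g : GL (Fin 4) F) :
    Function.Injective (fun v : Fin 4 → F => Matrix.vecMul v (g : Matrix (Fin 4) (Fin 4) F)) :=
  Matrix.vecMul_injective_of_isUnit g.isUnit

lemma vecMul_ne {F : Type} [Field F] (g : GL (Fin 4) F) (i : Fin 7) :
    Matrix.vecMul (modelVec F i) (g : Matrix (Fin 4) (Fin 4) F) ≠ 0 := by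
  intro h
  apply modelVec_ne F i
  apply vecMul_GL_inj g
  simpa using h

/-- The realization attached to an invertible matrix. -/
def Phi (F : Type) [Field F] (g : GL (Fin 4) F) (i : Fin 7) : ℙ F (Fin 4 → F) :=
  .mk F (Matrix.vecMul (modelVec F i) (g : Matrix (Fin 4) (Fin 4) F)) (vecMul_ne g i)

lemma det_vecMul {F : Type} [Field F] (a b c d : Fin 4 → F) (B : Matrix (Fin 4) (Fin 4) F) :
    Matrix.det (Matrix.of ![Matrix.vecMul a B, Matrix.vecMul b B, Matrix.vecMul c B,
      Matrix.vecMul d B]) = Matrix.det (Matrix.of ![a, b, c, d]) * B.det := by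
  rw [← Matrix.det_mul]
  congr 1
  ext i j
  fin_cases i <;> simp [Matrix.mul_apply, Matrix.vecMul, dotProduct]

lemma Phi_config (F : Type) [Field F] [CharP F 2] (g : GL (Fin 4) F) :
    IsConfigReal F h2planes ∅ (Phi F g) := by
  rw [isConfig_iff]
  intro a b c d h1 h2 h3 h4 h5 h6
  rw [aux_coplanar' F (Phi F g) _ (vecMul_ne g) (fun _ => rfl), det_vecMul,
    ← modelDet F a b c d h1 h2 h3 h4 h5 h6, mul_eq_zero]
  have : (g : Matrix (Fin 4) (Fin 4) F).det ≠ 0 :=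
    ((Matrix.isUnit_iff_isUnit_det _).1 g.isUnit).ne_zero
  simp [this]

lemma config_exists (F : Type) [Field F] (σ : Fin 7 → ℙ F (Fin 4 → F))
    (h : IsConfigReal F h2planes ∅ σ) : (2 : F) = 0 ∧ ∃ g, Phi F g = σ := by
  rw [isConfig_iff] at h
  have hv : ∀ i, (σ i).rep ≠ 0 := fun i => (σ i).rep_nonzero
  set v : Fin 7 → Fin 4 → F := fun i => (σ i).rep with hvdef
  have hp : ∀ i, σ i = .mk F (v i) (hv i) := fun i => (σ i).mk_rep.symm
  simp only [aux_coplanar' F σ v hv hp] at h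
  set B : Matrix (Fin 4) (Fin 4) F := Matrix.of ![v 0, v 1, v 2, v 4] with hB
  have hBd : B.det ≠ 0 := by
    rw [hB, Ne, h 0 1 2 4 (by decide) (by decide) (by decide) (by decide) (by decide) (by decide)]
    decide
  have hBu : IsUnit B.det := isUnit_iff_ne_zero.2 hBd
  obtain ⟨A, hA⟩ : ∃ A : Fin 7 → Fin 4 → F, ∀ i, v i = Matrix.vecMul (A i) B :=
    ⟨fun i => Matrix.vecMul (v i) B⁻¹, fun i => by
      rw [Matrix.vecMul_vecMul, Matrix.nonsing_inv_mul _ hBu, Matrix.vecMul_one]⟩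
  have hinj : Function.Injective (fun w : Fin 4 → F => Matrix.vecMul w B) :=
    Matrix.vecMul_injective_of_isUnit ((Matrix.isUnit_iff_isUnit_det _).2 hBu)
  have hA0 : A 0 = ![1,0,0,0] := by
    apply hinj; simp only [← hA]; ext j; simp [Matrix.vecMul, dotProduct, Fin.sum_univ_succ, hB]
  have hA1 : A 1 = ![0,1,0,0] := by
    apply hinj; simp only [← hA]; ext j; simp [Matrix.vecMul, dotProduct, Fin.sum_univ_succ, hB]
  have hA2 : A 2 = ![0,0,1,0] := by
    apply hinj; simp only [← hA]; ext j; simp [Matrix.vecMul, dotProduct, Fin.sum_univ_succ, hB]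
  have hA4 : A 4 = ![0,0,0,1] := by
    apply hinj; simp only [← hA]; ext j; simp [Matrix.vecMul, dotProduct, Fin.sum_univ_succ, hB]
  have h' : ∀ a b c d : Fin 7, a ≠ b → a ≠ c → a ≠ d → b ≠ c → b ≠ d → c ≠ d →
      (Matrix.det (Matrix.of ![A a, A b, A c, A d]) = 0 ↔
        ∃ h ∈ h2planes, ({a, b, c, d} : Finset (Fin 7)) ⊆ h) := by
    intro a b c d h1 h2 h3 h4 h5 h6
    rw [← h a b c d h1 h2 h3 h4 h5 h6, hA a, hA b, hA c, hA d, det_vecMul]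
    simp [hBd]
  clear h
  have pos : ∀ a b c d : Fin 7, a ≠ b ∧ a ≠ c ∧ a ≠ d ∧ b ≠ c ∧ b ≠ d ∧ c ≠ d ∧
      (∃ h ∈ h2planes, ({a, b, c, d} : Finset (Fin 7)) ⊆ h) → 
      Matrix.det (Matrix.of ![A a, A b, A c, A d]) = 0 := by
    rintro a b c d ⟨h1, h2, h3, h4, h5, h6, h7⟩
    exact (h' a b c d h1 h2 h3 h4 h5 h6).2 h7
  have neg : ∀ a b c d : Fin 7, a ≠ b ∧ a ≠ c ∧ a ≠ d ∧ b ≠ c ∧ b ≠ d ∧ c ≠ d ∧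
      (¬ ∃ h ∈ h2planes, ({a, b, c, d} : Finset (Fin 7)) ⊆ h) → 
      Matrix.det (Matrix.of ![A a, A b, A c, A d]) ≠ 0 := by
    rintro a b c d ⟨h1, h2, h3, h4, h5, h6, h7⟩
    exact fun hh => h7 ((h' a b c d h1 h2 h3 h4 h5 h6).1 hh)
  have e3 := pos 0 1 2 3 (by decide)
  have e5 := pos 0 1 4 5 (by decide)
  have e6 := pos 0 2 4 6 (by decide)
  have f1 := pos 1 2 5 6 (by decide)
  have f2 := pos 1 3 4 6 (by decide)
  have f3 := pos 2 3 4 5 (by decide)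
  have f0 := pos 0 3 5 6 (by decide)
  have n30 := neg 1 2 3 4 (by decide)
  have n31 := neg 0 2 3 4 (by decide)
  have n32 := neg 0 1 3 4 (by decide)
  have n50 := neg 1 2 4 5 (by decide)
  have n54 := neg 0 1 2 5 (by decide)
  have n60 := neg 1 2 4 6 (by decide)
  simp [det4, hA0, hA1, hA2, hA4] at e3 e5 e6 f0 f1 f2 f3 n30 n31 n32 n50 n54 n60
  simp only [e3, e5, e6] at f0 f1 f2 f3
  generalize hx : A 3 = x at *
  generalize hy : A 5 = y at *
  generalize hz : A 6 = z at *
  -- normalised scalars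
  have g1 : x 0 * y 1 = x 1 * y 0 := by grind
  have g2 : x 0 * z 2 = x 2 * z 0 := by grind
  have g3 : y 0 * z 3 = y 3 * z 0 := by grind
  have two : (2 : F) = 0 := by grind
  refine ⟨two, ?_⟩
  set G : Matrix (Fin 4) (Fin 4) F :=
    Matrix.diagonal ![1, x 1 / x 0, x 2 / x 0, y 3 / y 0] * B with hG
  have hGd : G.det ≠ 0 := by
    rw [hG, Matrix.det_mul, Matrix.det_diagonal]
    have m1 := div_ne_zero n31 n30
    have m2 := div_ne_zero n32 n30
    have m3 := div_ne_zero n54 n50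
    rw [Fin.prod_univ_four]
    exact mul_ne_zero (mul_ne_zero (mul_ne_zero (mul_ne_zero one_ne_zero m1) m2) m3) hBd
  refine ⟨Matrix.GeneralLinearGroup.mkOfDetNeZero G hGd, ?_⟩
  funext i
  rw [hp i, Phi, Projectivization.mk_eq_mk_iff']
  refine ⟨![1, x 1 / x 0, x 2 / x 0, 1 / x 0, y 3 / y 0, 1 / y 0, 1 / z 0] i, ?_⟩
  rw [hA i]
  change _ = Matrix.vecMul (modelVec F i) G
  rw [hG, ← Matrix.vecMul_vecMul, ← Matrix.smul_vecMul]
  congr 1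
  ext j
  rw [Matrix.vecMul_diagonal]
  fin_cases i <;> fin_cases j <;>
    simp [modelVec, hA0, hA1, hA2, hA4, hx, hy, hz, e3, e5, e6, n30, n50, n60] <;>
    field_simp <;> grind

lemma Phi_eq_iff (F : Type) [Field F] (g k : GL (Fin 4) F) :
    Phi F k = Phi F g ↔ ∃ c : Fˣ, c • (g : Matrix (Fin 4) (Fin 4) F) = k := by
  constructor
  · intro h
    have hc : ∀ i, ∃ c : Fˣ, c • Matrix.vecMul (modelVec F i) (g : Matrix (Fin 4) (Fin 4) F) =
        Matrix.vecMul (modelVec F i) (k : Matrix (Fin 4) (Fin 4) F) := by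
      intro i
      have := congrFun h i
      rwa [Phi, Phi, Projectivization.mk_eq_mk_iff] at this
    choose c hc using hc
    have row : ∀ (M : Matrix (Fin 4) (Fin 4) F), Matrix.vecMul (modelVec F 0) M = M 0 ∧
        Matrix.vecMul (modelVec F 1) M = M 1 ∧ Matrix.vecMul (modelVec F 2) M = M 2 ∧
        Matrix.vecMul (modelVec F 4) M = M 3 := by
      intro M
      refine ⟨?_, ?_, ?_, ?_⟩ <;> ext j <;>
        simp [modelVec, Matrix.vecMul, dotProduct, Fin.sum_univ_succ]
    have hk : (k : Matrix (Fin 4) (Fin 4) F) =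
        Matrix.diagonal ![(c 0 : F), c 1, c 2, c 4] * g := by
      have h0 := hc 0
      have h1 := hc 1
      have h2 := hc 2
      have h4 := hc 4
      rw [(row _).1, (row _).1] at h0
      rw [(row _).2.1, (row _).2.1] at h1
      rw [(row _).2.2.1, (row _).2.2.1] at h2
      rw [(row _).2.2.2, (row _).2.2.2] at h4
      ext i j
      rw [Matrix.diagonal_mul]
      fin_cases i
      · simp [← h0, Units.smul_def]
      · simp [← h1, Units.smul_def]
      · simp [← h2, Units.smul_def]
      · simp [← h4, Units.smul_def]
    have key : ∀ i, (c i : F) • modelVec F i =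
        Matrix.vecMul (modelVec F i) (Matrix.diagonal ![(c 0 : F), c 1, c 2, c 4]) := by
      intro i
      apply vecMul_GL_inj g
      simp only [Matrix.smul_vecMul, Matrix.vecMul_vecMul, ← hk, ← hc i, Units.smul_def]
    have k3 := key 3
    have k5 := key 5
    have a0 := congrFun k3 0
    have a1 := congrFun k3 1
    have a2 := congrFun k3 2
    have b0 := congrFun k5 0
    have b3 := congrFun k5 3
    simp [modelVec, Matrix.vecMul_diagonal] at a0 a1 a2 b0 b3
    refine ⟨c 0, ?_⟩
    rw [hk]
    ext i j
    rw [Matrix.diagonal_mul]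
    fin_cases i <;> simp [Units.smul_def, ← a0, ← a1, ← a2, ← b0, ← b3] <;> grind
  · rintro ⟨c, hc⟩
    funext i
    rw [Phi, Phi, Projectivization.mk_eq_mk_iff]
    refine ⟨c, ?_⟩
    rw [← hc]
    simp only [Units.smul_def, Matrix.vecMul_smul]

lemma card_GL_eq (F : Type) [Field F] [Fintype F] [CharP F 2] :
    Nat.card (GL (Fin 4) F) =
      Nat.card {σ : Fin 7 → ℙ F (Fin 4 → F) // IsConfigReal F h2planes ∅ σ} *
        (Fintype.card F - 1) := by
  classical
  let f : GL (Fin 4) F → {σ : Fin 7 → ℙ F (Fin 4 → F) // IsConfigReal F h2planes ∅ σ} :=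
    fun g => ⟨Phi F g, Phi_config F g⟩
  have hfin : Finite {σ : Fin 7 → ℙ F (Fin 4 → F) // IsConfigReal F h2planes ∅ σ} := by
    apply Finite.of_surjective f
    rintro ⟨σ, hσ⟩
    obtain ⟨-, g, hg⟩ := config_exists F σ hσ
    exact ⟨g, Subtype.ext hg⟩
  have hfib : ∀ r, Nat.card {k // f k = r} = Fintype.card F - 1 := by
    rintro ⟨σ, hσ⟩
    obtain ⟨-, g, hg⟩ := config_exists F σ hσ
    have hu : ∀ c : Fˣ, IsUnit (c • (g : Matrix (Fin 4) (Fin 4) F)) := fun c => g.isUnit.smul c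
    let e : Fˣ → {k // f k = ⟨σ, hσ⟩} := fun c => ⟨(hu c).unit, by
      apply Subtype.ext
      change Phi F _ = σ
      rw [← hg, Phi_eq_iff]
      exact ⟨c, rfl⟩⟩
    have he : Function.Bijective e := by
      constructor
      · intro c d hcd
        have h1 : c • (g : Matrix (Fin 4) (Fin 4) F) = d • (g : Matrix (Fin 4) (Fin 4) F) :=
          congrArg (fun x : {k // f k = ⟨σ, hσ⟩} =>
            (Units.val x.1 : Matrix (Fin 4) (Fin 4) F)) hcd
        have hne : (g : Matrix (Fin 4) (Fin 4) F) ≠ 0 := g.ne_zero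
        rw [Units.smul_def, Units.smul_def] at h1
        exact Units.ext (smul_left_injective F hne h1)
      · rintro ⟨k, hk⟩
        have hk' : Phi F k = Phi F g := by rw [hg]; exact congrArg Subtype.val hk
        obtain ⟨c, hc⟩ := (Phi_eq_iff F g k).1 hk'
        exact ⟨c, Subtype.ext (Units.ext hc)⟩
    rw [← Nat.card_eq_of_bijective e he, Nat.card_eq_fintype_card, Fintype.card_units]
  have := Fintype.ofFinite {σ : Fin 7 → ℙ F (Fin 4 → F) // IsConfigReal F h2planes ∅ σ}
  rw [← Nat.card_congr (Equiv.sigmaFiberEquiv f), Nat.card_sigma]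
  simp only [hfib, Finset.sum_const, Finset.card_univ, smul_eq_mul, Nat.card_eq_fintype_card]

/-- `A_{h₂}(4,q) = a(q) · |PGL₄(F_q)|`; in particular there are no strong realizations of
`h₂` when `q` is odd. -/
theorem Ah2_formula (F : Type) [Field F] [Fintype F] (q : ℕ) (hq : q = Fintype.card F) :
    Nat.card {σ : Fin 7 → ℙ F (Fin 4 → F) // IsConfigReal F h2planes ∅ σ} =
        (if Even q then 1 else 0) * (Nat.card (GL (Fin 4) F) / (q - 1)) ∧
      (¬ Even q → Nat.card {σ : Fin 7 → ℙ F (Fin 4 → F) // IsConfigReal F h2planes ∅ σ} = 0) := by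
  have hodd : ¬ Even q →
      Nat.card {σ : Fin 7 → ℙ F (Fin 4 → F) // IsConfigReal F h2planes ∅ σ} = 0 := by
    intro hne
    have : IsEmpty {σ : Fin 7 → ℙ F (Fin 4 → F) // IsConfigReal F h2planes ∅ σ} := by
      constructor
      rintro ⟨σ, hσ⟩
      have h2 := (config_exists F σ hσ).1
      apply hne
      have : ringChar F = 2 := by
        have hd : ringChar F ∣ 2 := ringChar.dvd (by exact_mod_cast h2)
        rcases (Nat.dvd_prime Nat.prime_two).1 hd with h | h
        · exact absurd h CharP.ringChar_ne_one
        · exact h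
      rw [hq, Nat.even_iff]
      exact FiniteField.even_card_iff_char_two.1 this
    exact Nat.card_of_isEmpty
  refine ⟨?_, hodd⟩
  by_cases hev : Even q
  · have h2 : ringChar F = 2 :=
      FiniteField.even_card_iff_char_two.2 (Nat.even_iff.1 (hq ▸ hev))
    have : CharP F 2 := ringChar.of_eq h2
    have hc : 1 < Fintype.card F := Fintype.one_lt_card
    rw [if_pos hev, one_mul, card_GL_eq F, hq, Nat.mul_div_cancel _ (by omega)]
  · rw [if_neg hev, zero_mul, hodd hev]
end

section
/- For every prime power q, the number of strong realizations of the hyperfiguration h_3 in P^3(F_q) is A_{h_3}(4,q) = (q − 2) · |PGL_4(F_q)|. -/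
open scoped LinearAlgebra.Projectivization

namespace H3

lemma coplanar_iff {F : Type} [Field F] (w : Fin 4 → Fin 4 → F) (hw : ∀ i, w i ≠ 0) :
    Coplanar4 F (.mk F (w 0) (hw 0)) (.mk F (w 1) (hw 1)) (.mk F (w 2) (hw 2))
      (.mk F (w 3) (hw 3)) ↔ ¬ LinearIndependent F w := by
  unfold Coplanar4
  rw [linearIndependent_iff_card_le_finrank_span, Set.finrank]
  have : Set.range w = {w 0} ∪ {w 1} ∪ {w 2} ∪ {w 3} := by
    ext x; simp [Fin.exists_fin_succ, eq_comm]; tauto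
  rw [this]
  rw [Submodule.span_union, Submodule.span_union, Submodule.span_union]
  simp only [Projectivization.submodule_mk, Fintype.card_fin]
  rw [not_le]
  exact Nat.lt_succ_iff.symm

lemma collinear_iff {F : Type} [Field F] (w : Fin 3 → Fin 4 → F) (hw : ∀ i, w i ≠ 0) :
    Collinear3 F (.mk F (w 0) (hw 0)) (.mk F (w 1) (hw 1)) (.mk F (w 2) (hw 2))
       ↔ ¬ LinearIndependent F w := by
  unfold Collinear3
  rw [linearIndependent_iff_card_le_finrank_span, Set.finrank]
  have : Set.range w = {w 0} ∪ {w 1} ∪ {w 2} := by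
    ext x; simp [Fin.exists_fin_succ, eq_comm]; tauto
  rw [this]
  rw [Submodule.span_union, Submodule.span_union]
  simp only [Projectivization.submodule_mk, Fintype.card_fin]
  rw [not_le]
  exact Nat.lt_succ_iff.symm

/-- coefficient matrix -/
def C {F : Type} [Field F] (t : F) : Matrix (Fin 7) (Fin 4) F :=
  !![1, 1, 1, 0; t, -1, 0, 1; 1 + t, 0, 1, 1; 1, 0, 0, 0; 0, 1, 0, 0; 0, 0, 1, 0; 0, 0, 0, 1]

lemma det4 {F : Type} [Field F] (M : Matrix (Fin 4) (Fin 4) F) : M.det =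
    M 0 0 * (M 1 1 * (M 2 2 * M 3 3 - M 2 3 * M 3 2) - M 1 2 * (M 2 1 * M 3 3 - M 2 3 * M 3 1)
      + M 1 3 * (M 2 1 * M 3 2 - M 2 2 * M 3 1))
    - M 0 1 * (M 1 0 * (M 2 2 * M 3 3 - M 2 3 * M 3 2) - M 1 2 * (M 2 0 * M 3 3 - M 2 3 * M 3 0)
      + M 1 3 * (M 2 0 * M 3 2 - M 2 2 * M 3 0))
    + M 0 2 * (M 1 0 * (M 2 1 * M 3 3 - M 2 3 * M 3 1) - M 1 1 * (M 2 0 * M 3 3 - M 2 3 * M 3 0)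
      + M 1 3 * (M 2 0 * M 3 1 - M 2 1 * M 3 0))
    - M 0 3 * (M 1 0 * (M 2 1 * M 3 2 - M 2 2 * M 3 1) - M 1 1 * (M 2 0 * M 3 2 - M 2 2 * M 3 0)
      + M 1 2 * (M 2 0 * M 3 1 - M 2 1 * M 3 0)) := by
  rw [Matrix.det_succ_row_zero]
  simp only [Matrix.det_fin_three, Fin.sum_univ_succ, Matrix.submatrix_apply]
  simp [Fin.succAbove]
  ring

lemma det_sorted {F : Type} [Field F] (t : F) (h0 : t ≠ 0) (h1 : 1 + t ≠ 0)
    (a b c d : Fin 7) (hab : a < b) (hbc : b < c) (hcd : c < d) :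
    ((C t).submatrix ![a, b, c, d] id).det = 0 ↔
      ∃ h ∈ h3planes, a ∈ h ∧ b ∈ h ∧ c ∈ h ∧ d ∈ h := by
  have key : ∀ (x : F) (P : Prop), (x = 0 ∧ P) ∨
      ((x = 1 ∨ x = -1 ∨ x = t ∨ x = -t ∨ x = 1 + t ∨ x = - (1 + t)) ∧ ¬ P) →
      (x = 0 ↔ P) := by
    rintro x P (⟨h, h'⟩ | ⟨h, h'⟩)
    · simp [h, h']
    · simp only [h', iff_false]
      rcases h with rfl | rfl | rfl | rfl | rfl | rfl <;> grind
  apply key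
  rw [det4]
  simp only [Matrix.submatrix_apply, Matrix.cons_val, id]
  fin_cases a <;> fin_cases b <;> (try (exfalso; revert hab; decide)) <;>
  fin_cases c <;> (try (exfalso; revert hbc; decide)) <;>
  fin_cases d <;> (try (exfalso; revert hcd; decide)) <;> clear hab hbc hcd <;>
  first
  | (refine Or.inl ⟨?_, by decide⟩
     simp [C])
  | (refine Or.inr ⟨?_, by decide⟩
     simp [C] <;> grind)

/-- The seven vectors. -/
def W {F : Type} [Field F] (g : GL (Fin 4) F) (t : F) : Fin 7 → Fin 4 → F :=
  fun i => (C t * g.val) i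

lemma li_iff {F : Type} [Field F] (g : GL (Fin 4) F) (t : F) (f : Fin 4 → Fin 7) :
    LinearIndependent F (fun i => W g t (f i)) ↔ ((C t).submatrix f id).det ≠ 0 := by
  have h1 : (fun i => W g t (f i)) = ((C t).submatrix f id * g.val).row := by
    ext i j
    simp [W, Matrix.mul_apply, Matrix.row]
  rw [h1, Matrix.linearIndependent_rows_iff_isUnit, Matrix.isUnit_iff_isUnit_det, Matrix.det_mul,
    isUnit_iff_ne_zero]
  have : g.val.det ≠ 0 := g.det_ne_zero
  simp [this]

lemma li_planes {F : Type} [Field F] (g : GL (Fin 4) F) (t : F) (h0 : t ≠ 0) (h1 : 1 + t ≠ 0)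
    (f : Fin 4 → Fin 7) (hf : Function.Injective f) :
    ¬ LinearIndependent F (fun i => W g t (f i)) ↔ ∃ h ∈ h3planes, ∀ i, f i ∈ h := by
  have hm : StrictMono (f ∘ Tuple.sort f) :=
    (Tuple.monotone_sort f).strictMono_of_injective (hf.comp (Tuple.sort f).injective)
  have h2 : LinearIndependent F (fun i => W g t (f i)) ↔
      LinearIndependent F (fun i => W g t ((f ∘ Tuple.sort f) i)) :=
    (linearIndependent_equiv (Tuple.sort f) (f := fun i => W g t (f i))).symm
  have h3 : ∀ h : Finset (Fin 7), (∀ i, f i ∈ h) ↔ ∀ i, (f ∘ Tuple.sort f) i ∈ h := fun h =>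
    ((Tuple.sort f).forall_congr_left (p := fun i => f i ∈ h)).trans (by
      constructor
      · intro H i; simpa using H (Tuple.sort f (Tuple.sort f i))
      · intro H i; simpa using H ((Tuple.sort f).symm ((Tuple.sort f).symm i)))
  simp only [h2, h3]
  generalize f ∘ Tuple.sort f = k at hm
  rw [li_iff, not_not]
  have hk : k = ![k 0, k 1, k 2, k 3] := by
    ext i; fin_cases i <;> rfl
  rw [hk, det_sorted t h0 h1 _ _ _ _ (hm (by decide)) (hm (by decide)) (hm (by decide))]
  simp [Fin.forall_fin_succ]

lemma dec3 : ∀ a b c : Fin 7, a ≠ b → a ≠ c → b ≠ c →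
    (∃ l ∈ h3lines, ({a, b, c} : Finset (Fin 7)) ⊆ l) ∨
    ∃ d, a ≠ d ∧ b ≠ d ∧ c ≠ d ∧ ¬ ∃ h ∈ h3planes, ({a, b, c, d} : Finset (Fin 7)) ⊆ h := by
  decide +kernel

lemma dec3' : ∀ a b c : Fin 7, a ≠ b → a ≠ c → b ≠ c →
    (∃ l ∈ h3lines, ({a, b, c} : Finset (Fin 7)) ⊆ l) →
    ∃ e : Fin 3 → Fin 3, Function.Injective e ∧ ∀ i, (![a, b, c] (e i)).val = i.val := by
  decide +kernel

lemma dec2 : ∀ a b : Fin 7, a ≠ b → ∃ c, ∃ d, a ≠ c ∧ b ≠ c ∧ a ≠ d ∧ b ≠ d ∧ c ≠ d ∧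
    ¬ ∃ h ∈ h3planes, ({a, b, c, d} : Finset (Fin 7)) ⊆ h := by
  decide +kernel

lemma H4 {F : Type} [Field F] (g : GL (Fin 4) F) (t : F) (h0 : t ≠ 0) (h1 : 1 + t ≠ 0)
    (a b c d : Fin 7) (hab : a ≠ b) (hac : a ≠ c) (had : a ≠ d) (hbc : b ≠ c) (hbd : b ≠ d)
    (hcd : c ≠ d) :
      (¬ LinearIndependent F (fun i => W g t (![a, b, c, d] i)) ↔
        ∃ h ∈ h3planes, ({a, b, c, d} : Finset (Fin 7)) ⊆ h) := by
  rw [li_planes g t h0 h1 ![a, b, c, d] (by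
      intro i j; fin_cases i <;> fin_cases j <;> simp <;> grind)]
  simp [Fin.forall_fin_succ, Finset.insert_subset_iff]

lemma W_ne {F : Type} [Field F] (g : GL (Fin 4) F) (t : F) (h0 : t ≠ 0) (h1 : 1 + t ≠ 0)
    (a : Fin 7) : W g t a ≠ 0 := by
  obtain ⟨b, hb⟩ : ∃ b, a ≠ b := by revert a; decide
  obtain ⟨c, d, h1', h2, h3, h4, h5, h6⟩ := dec2 a b hb
  rw [← H4 g t h0 h1 a b c d hb h1' h3 h2 h4 h5, not_not] at h6
  exact h6.ne_zero 0

lemma W_vals {F : Type} [Field F] (g : GL (Fin 4) F) (t : F) :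
    W g t 0 = g.val 0 + g.val 1 + g.val 2 ∧ W g t 1 = t • g.val 0 - g.val 1 + g.val 3 ∧
    W g t 2 = (1 + t) • g.val 0 + g.val 2 + g.val 3 ∧ W g t 3 = g.val 0 ∧ W g t 4 = g.val 1 ∧
    W g t 5 = g.val 2 ∧ W g t 6 = g.val 3 := by
  refine ⟨?_, ?_, ?_, ?_, ?_, ?_, ?_⟩ <;> ext j <;>
    simp [W, C, Matrix.mul_apply, Fin.sum_univ_succ] <;> ring

/-- the realization attached to a frame and a parameter -/
def S {F : Type} [Field F] (g : GL (Fin 4) F) (t : F) (h0 : t ≠ 0) (h1 : 1 + t ≠ 0) :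
    Fin 7 → ℙ F (Fin 4 → F) := fun i => .mk F (W g t i) (W_ne g t h0 h1 i)

lemma S_real {F : Type} [Field F] (g : GL (Fin 4) F) (t : F) (h0 : t ≠ 0) (h1 : 1 + t ≠ 0) :
    IsConfigReal F h3planes h3lines (S g t h0 h1) := by
  refine ⟨?_, ?_, ?_⟩
  · intro a b hab
    by_contra hne
    obtain ⟨c, d, h1', h2, h3, h4, h5, h6⟩ := dec2 a b hne
    rw [← H4 g t h0 h1 a b c d hne h1' h3 h2 h4 h5, not_not] at h6
    simp only [S, Projectivization.mk_eq_mk_iff'] at hab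
    obtain ⟨x, hx⟩ := hab
    rw [Fintype.linearIndependent_iff] at h6
    have := h6 ![1, -x, 0, 0] (by simp [Fin.sum_univ_succ, hx]) 0
    simp at this
  · intro a b c hab hac hbc
    rw [show Collinear3 F (S g t h0 h1 a) (S g t h0 h1 b) (S g t h0 h1 c) ↔ _ from
      collinear_iff (fun i => W g t (![a, b, c] i)) (fun i => W_ne g t h0 h1 _)]
    constructor
    · intro hd
      rcases dec3 a b c hab hac hbc with h | ⟨d, h1', h2, h3, h4⟩
      · exact h
      · exfalso
        rw [← H4 g t h0 h1 a b c d hab hac h1' hbc h2 h3, not_not] at h4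
        apply hd
        have := h4.comp (Fin.castSucc : Fin 3 → Fin 4) (Fin.castSucc_injective 3)
        convert this using 1
        ext i; fin_cases i <;> rfl
    · intro hl hd
      obtain ⟨e, he, h⟩ := dec3' a b c hab hac hbc hl
      have h2 := hd.comp e he
      have h3 : ((fun i => W g t (![a, b, c] i)) ∘ e) = fun i : Fin 3 => W g t (![0, 1, 2] i) := by
        ext i; simp only [Function.comp]
        have : ![a, b, c] (e i) = ![0, 1, 2] i := by
          apply Fin.ext; rw [h i]; fin_cases i <;> rfl
        rw [this]
      rw [h3, Fintype.linearIndependent_iff] at h2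
      have := h2 ![1, 1, -1] (by
        obtain ⟨v0, v1, v2, -⟩ := W_vals g t
        simp only [Fin.sum_univ_succ, Matrix.cons_val, Fin.succ_zero_eq_one, Fin.succ_one_eq_two]
        simp [v0, v1, v2]
        module) 0
      simp at this
  · intro a b c d hab hac had hbc hbd hcd
    rw [show Coplanar4 F (S g t h0 h1 a) (S g t h0 h1 b) (S g t h0 h1 c) (S g t h0 h1 d) ↔ _ from
      coplanar_iff (fun i => W g t (![a, b, c, d] i)) (fun i => W_ne g t h0 h1 _)]
    exact H4 g t h0 h1 a b c d hab hac had hbc hbd hcd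

lemma li4 {F : Type} [Field F] {u v w x : Fin 4 → F} (h : LinearIndependent F ![u, v, w, x])
    {a b c d a' b' c' d' : F}
    (he : a • u + b • v + c • w + d • x = a' • u + b' • v + c' • w + d' • x) :
    a = a' ∧ b = b' ∧ c = c' ∧ d = d' := by
  rw [Fintype.linearIndependent_iff] at h
  have := h ![a - a', b - b', c - c', d - d'] (by
    simp [Fin.sum_univ_succ]
    linear_combination (norm := module) he)
  simp [Fin.forall_fin_succ, sub_eq_zero] at this
  exact this

lemma gl_li {F : Type} [Field F] (g : GL (Fin 4) F) :
    LinearIndependent F ![g.val 0, g.val 1, g.val 2, g.val 3] := by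
  have h : LinearIndependent F g.val.row :=
    Matrix.linearIndependent_rows_iff_isUnit.2 g.isUnit
  convert h using 1
  ext i; fin_cases i <;> rfl

lemma fiber {F : Type} [Field F] (g g' : GL (Fin 4) F) (t t' : F) (h0 : t ≠ 0) (h1 : 1 + t ≠ 0)
    (h0' : t' ≠ 0) (h1' : 1 + t' ≠ 0) (h : S g' t' h0' h1' = S g t h0 h1) :
    t' = t ∧ ∃ c : Fˣ, g' = c • g := by
  have hs : ∀ i, ∃ a : F, a • W g t i = W g' t' i := fun i => by
    have := congrFun h i
    simpa only [S, Projectivization.mk_eq_mk_iff'] using this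
  choose a ha using hs
  obtain ⟨v0, v1, v2, v3, v4, v5, v6⟩ := W_vals g t
  obtain ⟨u0, u1, u2, u3, u4, u5, u6⟩ := W_vals g' t'
  have e3 := ha 3
  have e4 := ha 4
  have e5 := ha 5
  have e6 := ha 6
  have e0 := ha 0
  have e1 := ha 1
  rw [v3, u3] at e3
  rw [v4, u4] at e4
  rw [v5, u5] at e5
  rw [v6, u6] at e6
  rw [v0, u0, ← e3, ← e4, ← e5] at e0
  rw [v1, u1, ← e3, ← e4, ← e6] at e1
  obtain ⟨p1, p2, p3, -⟩ := li4 (gl_li g) (a := a 0) (b := a 0) (c := a 0) (d := 0) (a' := a 3)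
    (b' := a 4) (c' := a 5) (d' := 0) (by linear_combination (norm := module) e0)
  obtain ⟨q1, q2, -, q3⟩ := li4 (gl_li g) (a := a 1 * t) (b := - a 1) (c := 0) (d := a 1)
    (a' := t' * a 3)
    (b' := - a 4) (c' := 0) (d' := a 6) (by linear_combination (norm := module) e1)
  have hz : a 3 ≠ 0 := by
    intro hz
    have := W_ne g' t' h0' h1' 3
    rw [← ha 3, hz, zero_smul] at this
    exact this rfl
  have q2' := neg_injective q2
  refine ⟨?_, Units.mk0 (a 3) hz, ?_⟩
  · apply mul_right_cancel₀ hz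
    rw [← q1, q2', ← p2, ← p1, mul_comm]
  · apply Units.ext
    rw [Units.val_smul]
    funext i
    change g'.val i = a 3 • g.val i
    fin_cases i
    · exact e3.symm
    · rw [← p1, p2]; exact e4.symm
    · rw [← p1, p3]; exact e5.symm
    · rw [← p1, p2, ← q2', q3]; exact e6.symm

lemma S_smul {F : Type} [Field F] (g : GL (Fin 4) F) (c : Fˣ) (t : F) (h0 : t ≠ 0)
    (h1 : 1 + t ≠ 0) : S (c • g) t h0 h1 = S g t h0 h1 := by
  funext i
  simp only [S]
  rw [Projectivization.mk_eq_mk_iff]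
  refine ⟨c, ?_⟩
  unfold W
  ext j
  simp [Matrix.mul_apply, Units.smul_def, Finset.mul_sum]
  refine Finset.sum_congr rfl fun k _ => by ring

lemma plane_expr {F : Type} [Field F] {y u v x : Fin 4 → F}
    (h : ¬ LinearIndependent F ![y, u, v, x]) (h1 : LinearIndependent F ![u, v, x])
    (h2 : LinearIndependent F ![y, u, v]) (h3 : LinearIndependent F ![y, u, x])
    (h4 : LinearIndependent F ![y, v, x]) :
    ∃ a b c : F, a ≠ 0 ∧ b ≠ 0 ∧ c ≠ 0 ∧ y = a • u + b • v + c • x := by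
  have hm : y ∈ Submodule.span F {u, v, x} := by
    by_contra hy
    apply h
    have := (linearIndependent_finCons (x := y) (v := ![u, v, x])).2 ⟨h1, by
      rwa [show Set.range ![u, v, x] = {u, v, x} by
        ext z; simp [eq_comm]; tauto]⟩
    exact this
  obtain ⟨a, b, c, habc⟩ := Submodule.mem_span_triple.1 hm
  rw [Fintype.linearIndependent_iff] at h2 h3 h4
  refine ⟨a, b, c, ?_, ?_, ?_, habc.symm⟩ <;> rintro rfl
  · have := h4 ![1, -b, -c] (by simp [Fin.sum_univ_succ, ← habc]; try module) 0
    simp at this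
  · have := h3 ![1, -a, -c] (by simp [Fin.sum_univ_succ, ← habc]; try module) 0
    simp at this
  · have := h2 ![1, -a, -b] (by simp [Fin.sum_univ_succ, ← habc]; try module) 0
    simp at this

lemma S_surj {F : Type} [Field F] (σ : Fin 7 → ℙ F (Fin 4 → F))
    (hσ : IsConfigReal F h3planes h3lines σ) :
    ∃ (g : GL (Fin 4) F) (t : F) (h0 : t ≠ 0) (h1 : 1 + t ≠ 0), S g t h0 h1 = σ := by
  obtain ⟨w, hw, hs⟩ : ∃ (w : Fin 7 → Fin 4 → F) (hw : ∀ i, w i ≠ 0), ∀ i, σ i = .mk F (w i) (hw i) :=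
    ⟨fun i => (σ i).rep, fun i => (σ i).rep_nonzero, fun i => (σ i).mk_rep.symm⟩
  obtain ⟨-, hcol, hcop⟩ := hσ
  have hcol' : ∀ a b c : Fin 7, a ≠ b → a ≠ c → b ≠ c →
      (¬ LinearIndependent F ![w a, w b, w c] ↔
        ∃ l ∈ h3lines, ({a, b, c} : Finset (Fin 7)) ⊆ l) := by
    intro a b c hab hac hbc
    rw [← hcol a b c hab hac hbc, hs a, hs b, hs c]
    exact (collinear_iff ![w a, w b, w c]
      (fun i => by fin_cases i <;> simp [hw])).symm
  have hcop' : ∀ a b c d : Fin 7, a ≠ b → a ≠ c → a ≠ d → b ≠ c → b ≠ d → c ≠ d →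
      (¬ LinearIndependent F ![w a, w b, w c, w d] ↔
        ∃ h ∈ h3planes, ({a, b, c, d} : Finset (Fin 7)) ⊆ h) := by
    intro a b c d hab hac had hbc hbd hcd
    rw [← hcop a b c d hab hac had hbc hbd hcd, hs a, hs b, hs c, hs d]
    exact (coplanar_iff ![w a, w b, w c, w d]
      (fun i => by fin_cases i <;> simp [hw])).symm
  have nc : ∀ a b c : Fin 7, (a ≠ b ∧ a ≠ c ∧ b ≠ c ∧
      ¬ ∃ l ∈ h3lines, ({a, b, c} : Finset (Fin 7)) ⊆ l) →
      LinearIndependent F ![w a, w b, w c] := by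
    rintro a b c ⟨h1, h2, h3, h4⟩
    rwa [← hcol' a b c h1 h2 h3, not_not] at h4
  have hB : LinearIndependent F ![w 3, w 4, w 5, w 6] :=
    not_not.1 ((hcop' 3 4 5 6 (by decide) (by decide) (by decide) (by decide) (by decide)
      (by decide)).not.2 (by decide))
  obtain ⟨a3, a4, a5, ha3, ha4, ha5, ha⟩ := plane_expr
    ((hcop' 0 3 4 5 (by decide) (by decide) (by decide) (by decide) (by decide)
      (by decide)).2 (by decide)) (nc 3 4 5 (by decide)) (nc 0 3 4 (by decide))
      (nc 0 3 5 (by decide)) (nc 0 4 5 (by decide))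
  obtain ⟨b3, b4, b6, hb3, hb4, hb6, hb⟩ := plane_expr
    ((hcop' 1 3 4 6 (by decide) (by decide) (by decide) (by decide) (by decide)
      (by decide)).2 (by decide)) (nc 3 4 6 (by decide)) (nc 1 3 4 (by decide))
      (nc 1 3 6 (by decide)) (nc 1 4 6 (by decide))
  obtain ⟨c3, c5, c6, hc3, hc5, hc6, hc⟩ := plane_expr
    ((hcop' 2 3 5 6 (by decide) (by decide) (by decide) (by decide) (by decide)
      (by decide)).2 (by decide)) (nc 3 5 6 (by decide)) (nc 2 3 5 (by decide))
      (nc 2 3 6 (by decide)) (nc 2 5 6 (by decide))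
  have hd := (hcol' 0 1 2 (by decide) (by decide) (by decide)).2 (by decide)
  obtain ⟨k, hk, i, hi⟩ := Fintype.not_linearIndependent_iff.1 hd
  obtain ⟨x, y, z, hxyz, hne⟩ : ∃ x y z : F, x • w 0 + y • w 1 + z • w 2 = 0 ∧
      (x ≠ 0 ∨ y ≠ 0 ∨ z ≠ 0) := by
    refine ⟨k 0, k 1, k 2, ?_, ?_⟩
    · simpa [Fin.sum_univ_succ, add_assoc] using hk
    · fin_cases i
      · exact Or.inl hi
      · exact Or.inr (Or.inl hi)
      · exact Or.inr (Or.inr hi)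
  obtain ⟨r3, r4, r5, r6⟩ := li4 hB (a := x * a3 + y * b3 + z * c3) (b := x * a4 + y * b4)
    (c := x * a5 + z * c5) (d := y * b6 + z * c6) (a' := 0) (b' := 0) (c' := 0) (d' := 0) (by
      rw [ha, hb, hc] at hxyz
      linear_combination (norm := module) hxyz)
  have hx : x ≠ 0 := by
    rintro rfl
    simp [hb4] at r4
    simp [hc5] at r5
    simp [r4, r5] at hne
  have hy : y ≠ 0 := by
    rintro rfl
    simp [hx, ha4] at r4
  have hz : z ≠ 0 := by
    rintro rfl
    simp [hx, ha5] at r5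
  let M : Matrix (Fin 4) (Fin 4) F :=
    ![(x * a3) • w 3, (x * a4) • w 4, (x * a5) • w 5, (y * b6) • w 6]
  have hM : IsUnit M := by
    rw [← Matrix.linearIndependent_rows_iff_isUnit, Fintype.linearIndependent_iff]
    intro l hl
    have hl' : l 0 • (x * a3) • w 3 + l 1 • (x * a4) • w 4 + l 2 • (x * a5) • w 5
        + l 3 • (y * b6) • w 6 = 0 := by
      rw [← hl, Fin.sum_univ_four]; rfl
    obtain ⟨s0, s1, s2, s3⟩ := li4 hB (a := l 0 * (x * a3)) (b := l 1 * (x * a4))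
      (c := l 2 * (x * a5)) (d := l 3 * (y * b6)) (a' := 0) (b' := 0) (c' := 0) (d' := 0) (by
        linear_combination (norm := module) hl')
    simp [hx, ha3] at s0
    simp [hx, ha4] at s1
    simp [hx, ha5] at s2
    simp [hy, hb6] at s3
    intro i
    fin_cases i <;> assumption
  have hm0 : hM.unit.val 0 = (x * a3) • w 3 := rfl
  have hm1 : hM.unit.val 1 = (x * a4) • w 4 := rfl
  have hm2 : hM.unit.val 2 = (x * a5) • w 5 := rfl
  have hm3 : hM.unit.val 3 = (y * b6) • w 6 := rfl
  have hxa : x * a3 ≠ 0 := mul_ne_zero hx ha3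
  have ht : y * b3 / (x * a3) * (x * a3) = y * b3 := div_mul_cancel₀ _ hxa
  have h1t : 1 + y * b3 / (x * a3) ≠ 0 := by
    intro h
    have h' : (1 + y * b3 / (x * a3)) * (x * a3) = 0 := by rw [h, zero_mul]
    have h'' : z * c3 = 0 := by linear_combination r3 - h' + ht
    exact mul_ne_zero hz hc3 h''
  have h0t : y * b3 / (x * a3) ≠ 0 := div_ne_zero (mul_ne_zero hy hb3) hxa
  generalize y * b3 / (x * a3) = t at ht h1t h0t
  refine ⟨hM.unit, t, h0t, h1t, ?_⟩
  obtain ⟨v0, v1, v2, v3, v4, v5, v6⟩ := W_vals hM.unit t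
  rw [hm0, hm1, hm2] at v0
  rw [hm0, hm1, hm3, smul_smul, ht] at v1
  rw [hm0, hm2, hm3] at v2
  rw [hm0] at v3
  rw [hm1] at v4
  rw [hm2] at v5
  rw [hm3] at v6
  have hyb : y * b4 = - (x * a4) := by linear_combination r4
  have key : ∀ i, ∃ a : F, a • w i = W hM.unit t i := by
    intro i
    fin_cases i
    · exact ⟨x, by simp only [Fin.reduceFinMk]; refine Eq.trans ?_ v0.symm; change x • w 0 = _; rw [ha]; module⟩
    · refine ⟨y, ?_⟩
      refine Eq.trans ?_ v1.symm
      change y • w 1 = _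
      have : (y * b4) • w 4 = (- (x * a4)) • w 4 := by rw [hyb]
      rw [hb]
      linear_combination (norm := module) this
    · refine ⟨-z, ?_⟩
      refine Eq.trans ?_ v2.symm
      change (-z) • w 2 = _
      have e1 : (-z) • w 2 = x • w 0 + y • w 1 := by
        linear_combination (norm := module) -hxyz
      have e2 : (y * b4) • w 4 = (- (x * a4)) • w 4 := by rw [hyb]
      have e3 : (t * (x * a3)) • w 3 = (y * b3) • w 3 := by rw [ht]
      rw [e1, ha, hb]
      linear_combination (norm := module) e2 - e3
    · exact ⟨_, v3.symm⟩
    · exact ⟨_, v4.symm⟩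
    · exact ⟨_, v5.symm⟩
    · exact ⟨_, v6.symm⟩
  funext i
  rw [hs i]
  simp only [S]
  rw [Projectivization.mk_eq_mk_iff']
  exact key i

lemma card_T (F : Type) [Field F] [Fintype F] :
    Nat.card {t : F // t ≠ 0 ∧ 1 + t ≠ 0} = Fintype.card F - 2 := by
  classical
  rw [Nat.card_eq_fintype_card, Fintype.card_subtype]
  have : (Finset.univ.filter fun t : F => t ≠ 0 ∧ 1 + t ≠ 0) = ({0, -1} : Finset F)ᶜ := by
    ext t
    simp only [Finset.mem_filter, Finset.mem_univ, true_and, Finset.mem_compl, Finset.mem_insert,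
      Finset.mem_singleton, not_or]
    refine and_congr_right fun _ => not_congr ?_
    rw [add_comm, add_eq_zero_iff_eq_neg]
  rw [this, Finset.card_compl, Finset.card_pair]
  simp

lemma scalar_inj {F : Type} [Field F] (c c' : Fˣ) (g : GL (Fin 4) F) (h : c • g = c' • g) :
    c = c' := by
  have h2 : g.val 0 ≠ 0 := (gl_li g).ne_zero 0
  obtain ⟨j, hj⟩ := Function.ne_iff.1 h2
  have h1 : (c • g).val 0 j = (c' • g).val 0 j := by rw [h]
  apply Units.ext
  exact mul_right_cancel₀ hj h1

lemma main (F : Type) [Field F] [Fintype F] :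
    Nat.card {σ : Fin 7 → ℙ F (Fin 4 → F) // IsConfigReal F h3planes h3lines σ} *
      (Fintype.card F - 1) = Nat.card (GL (Fin 4) F) * (Fintype.card F - 2) := by
  classical
  rw [← card_T F, ← Nat.card_prod, ← Fintype.card_units, ← Nat.card_eq_fintype_card, ← Nat.card_prod]
  choose G t h0 h1 hS using fun σ : {σ : Fin 7 → ℙ F (Fin 4 → F) //
    IsConfigReal F h3planes h3lines σ} => S_surj σ.1 σ.2
  refine Nat.card_congr (Equiv.ofBijective
    (fun p => (p.2 • G p.1, ⟨t p.1, h0 p.1, h1 p.1⟩)) ⟨?_, ?_⟩)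
  · rintro ⟨σ, c⟩ ⟨σ', c'⟩ h
    simp only [Prod.mk.injEq, Subtype.mk.injEq] at h
    obtain ⟨e1, e2⟩ := h
    have hσ : σ = σ' := by
      apply Subtype.ext
      rw [← hS σ, ← hS σ', ← S_smul _ c, ← S_smul (G σ') c']
      simp only [e1]
      congr 1
    subst hσ
    rw [Prod.mk.injEq]
    exact ⟨rfl, scalar_inj _ _ _ e1⟩
  · rintro ⟨g, s, hs0, hs1⟩
    obtain ⟨e1, c, e2⟩ := fiber (G ⟨_, S_real g s hs0 hs1⟩) g (t ⟨_, S_real g s hs0 hs1⟩) s (h0 _)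
      (h1 _) hs0 hs1 (hS ⟨_, S_real g s hs0 hs1⟩).symm
    exact ⟨(⟨_, S_real g s hs0 hs1⟩, c), Prod.ext e2.symm (Subtype.ext e1.symm)⟩

end H3

/-- `A_{h₃}(4,q) = (q - 2) · |PGL₄(F_q)|`. -/
theorem Ah3_formula (F : Type) [Field F] [Fintype F] (q : ℕ) (hq : q = Fintype.card F) :
    Nat.card {σ : Fin 7 → ℙ F (Fin 4 → F) // IsConfigReal F h3planes h3lines σ} =
      (q - 2) * (Nat.card (GL (Fin 4) F) / (q - 1)) := by
  subst hq
  have h := H3.main F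
  have h2 : 1 < Fintype.card F := Fintype.one_lt_card
  have hdvd : Fintype.card F - 1 ∣ Nat.card (GL (Fin 4) F) := by
    rw [Matrix.card_GL_field]
    refine Dvd.dvd.trans ?_ (Finset.dvd_prod_of_mem _ (Finset.mem_univ (0 : Fin 4)))
    simpa using Nat.sub_dvd_pow_sub_pow (Fintype.card F) 1 4
  obtain ⟨m, hm⟩ := hdvd
  have h3 : 0 < Fintype.card F - 1 := by omega
  rw [hm, Nat.mul_div_cancel_left _ h3]
  rw [hm] at h
  apply Nat.eq_of_mul_eq_mul_right h3
  rw [h]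
  ring
end

section
/- For every prime power q, the number of strong realizations of the hyperfiguration h_4 in P^3(F_q) is A_{h_4}(4,q) = |PGL_4(F_q)|. -/
open scoped LinearAlgebra.Projectivization

/-- Planes of the hyperfiguration `h₄`. -/
def h4planes : Finset (Finset (Fin 7)) :=
  {{0, 1, 2, 3, 4}, {0, 1, 2, 5}, {0, 1, 2, 6}, {0, 3, 4, 5}, {0, 3, 4, 6}, {1, 3, 5, 6},
    {2, 4, 5, 6}}

/-- Lines of the hyperfiguration `h₄`. -/
def h4lines : Finset (Finset (Fin 7)) := {{0, 1, 2}, {0, 3, 4}}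


/-- integer coordinates of the standard realization -/
def vz : Fin 7 → Fin 4 → ℤ :=
  ![![1,0,0,0], ![0,1,0,0], ![1,1,0,0], ![0,0,1,0], ![1,0,-1,0], ![0,0,0,1], ![0,1,1,1]]

def det3x {R : Type} [CommRing R] (a b c : Fin 4 → R) (i j k : Fin 4) : R :=
  a i * (b j * c k - b k * c j) - a j * (b i * c k - b k * c i) + a k * (b i * c j - b j * c i)

def det4x {R : Type} [CommRing R] (a b c d : Fin 4 → R) : R :=
  a 0 * det3x b c d 1 2 3 - a 1 * det3x b c d 0 2 3 + a 2 * det3x b c d 0 1 3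
    - a 3 * det3x b c d 0 1 2

lemma det_eq_det4x {R : Type} [CommRing R] (a b c d : Fin 4 → R) :
    (Matrix.of ![a, b, c, d]).det = det4x a b c d := by
  simp [Matrix.det_succ_row_zero, Fin.sum_univ_succ, det4x, det3x, Fin.succAbove]
  ring

lemma vz_plane : ∀ a b c d : Fin 7, a ≠ b → a ≠ c → a ≠ d → b ≠ c → b ≠ d → c ≠ d →
    ((∃ h ∈ h4planes, ({a, b, c, d} : Finset (Fin 7)) ⊆ h) ∧
      det4x (vz a) (vz b) (vz c) (vz d) = 0) ∨
    ((¬ ∃ h ∈ h4planes, ({a, b, c, d} : Finset (Fin 7)) ⊆ h) ∧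
      (det4x (vz a) (vz b) (vz c) (vz d) = 1 ∨ det4x (vz a) (vz b) (vz c) (vz d) = -1)) := by
  decide +kernel

set_option synthInstance.maxHeartbeats 400000 in
set_option synthInstance.maxSize 2000 in
lemma vz_line : ∀ a b c : Fin 7, a ≠ b → a ≠ c → b ≠ c →
    (∃ h ∈ h4lines, ({a, b, c} : Finset (Fin 7)) ⊆ h) →
      ∃ s ∈ ({1, -1} : Finset ℤ), ∃ t ∈ ({1, -1} : Finset ℤ),
        ∀ j, vz c j = s * vz a j + t * vz b j := by
  decide +kernel

lemma vz_notline : ∀ a b c : Fin 7, a ≠ b → a ≠ c → b ≠ c →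
    (¬ ∃ h ∈ h4lines, ({a, b, c} : Finset (Fin 7)) ⊆ h) →
      ∃ d, a ≠ d ∧ b ≠ d ∧ c ≠ d ∧ ¬ ∃ h ∈ h4planes, ({a, b, c, d} : Finset (Fin 7)) ⊆ h := by
  decide +kernel

lemma vz_pair : ∀ a b : Fin 7, a ≠ b →
      ∃ c d, a ≠ c ∧ a ≠ d ∧ b ≠ c ∧ b ≠ d ∧ c ≠ d ∧
        ¬ ∃ h ∈ h4planes, ({a, b, c, d} : Finset (Fin 7)) ⊆ h := by
  decide +kernel

section
variable {F : Type} [Field F]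

lemma cop_iff_li (x y z w : Fin 4 → F) (hx : x ≠ 0) (hy : y ≠ 0) (hz : z ≠ 0) (hw : w ≠ 0) :
    Coplanar4 F (.mk F x hx) (.mk F y hy) (.mk F z hz) (.mk F w hw) ↔
      ¬ LinearIndependent F ![x, y, z, w] := by
  have h : (Projectivization.mk F x hx).submodule ⊔ (Projectivization.mk F y hy).submodule ⊔
      (Projectivization.mk F z hz).submodule ⊔ (Projectivization.mk F w hw).submodule = Submodule.span F (Set.range ![x, y, z, w]) := by
    simp only [Projectivization.submodule_mk, ← Submodule.span_union]
    congr 1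
    ext t; simp
  rw [Coplanar4, h, linearIndependent_iff_card_eq_finrank_span]
  have := finrank_range_le_card (R := F) ![x, y, z, w]
  simp only [Fintype.card_fin, Set.finrank] at *
  omega

lemma col_iff_li (x y z : Fin 4 → F) (hx : x ≠ 0) (hy : y ≠ 0) (hz : z ≠ 0) :
    Collinear3 F (.mk F x hx) (.mk F y hy) (.mk F z hz) ↔
      ¬ LinearIndependent F ![x, y, z] := by
  have h : (Projectivization.mk F x hx).submodule ⊔ (Projectivization.mk F y hy).submodule ⊔
      (Projectivization.mk F z hz).submodule
      = Submodule.span F (Set.range ![x, y, z]) := by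
    simp only [Projectivization.submodule_mk, ← Submodule.span_union]
    congr 1
    ext t; simp
  rw [Collinear3, h, linearIndependent_iff_card_eq_finrank_span]
  have := finrank_range_le_card (R := F) ![x, y, z]
  simp only [Fintype.card_fin, Set.finrank] at *
  omega

lemma li_iff_det (x y z w : Fin 4 → F) :
    LinearIndependent F ![x, y, z, w] ↔ det4x x y z w ≠ 0 := by
  rw [← det_eq_det4x, ← isUnit_iff_ne_zero, ← Matrix.isUnit_iff_isUnit_det,
    ← Matrix.linearIndependent_rows_iff_isUnit]
  rfl

lemma cop_iff (x y z w : Fin 4 → F) (hx : x ≠ 0) (hy : y ≠ 0) (hz : z ≠ 0) (hw : w ≠ 0) :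
    Coplanar4 F (.mk F x hx) (.mk F y hy) (.mk F z hz) (.mk F w hw) ↔ det4x x y z w = 0 := by
  rw [cop_iff_li, li_iff_det, not_not]

/-- the standard realization moved by a matrix -/
def pt (M : Matrix (Fin 4) (Fin 4) F) (i : Fin 7) : Fin 4 → F :=
  Matrix.vecMul (fun j => (vz i j : F)) M

lemma det4x_pt (M : Matrix (Fin 4) (Fin 4) F) (a b c d : Fin 7) :
    det4x (pt M a) (pt M b) (pt M c) (pt M d) =
      ((det4x (vz a) (vz b) (vz c) (vz d) : ℤ) : F) * M.det := by
  have h1 : ((det4x (vz a) (vz b) (vz c) (vz d) : ℤ) : F) =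
      det4x (fun j => (vz a j : F)) (fun j => (vz b j : F)) (fun j => (vz c j : F))
        (fun j => (vz d j : F)) := by
    simp [det4x, det3x]
  rw [h1, ← det_eq_det4x, ← det_eq_det4x, ← Matrix.det_mul]
  congr 1
  ext i j
  fin_cases i <;> simp [pt, Matrix.mul_apply, Matrix.vecMul, dotProduct]

lemma pt_ne (g : GL (Fin 4) F) (i : Fin 7) : pt g.1 i ≠ 0 := by
  intro h
  have h2 : (fun j => (vz i j : F)) = 0 := by
    have := congrArg (fun v => Matrix.vecMul v (g⁻¹).1) h
    simp only [pt, Matrix.vecMul_vecMul, Matrix.zero_vecMul] at this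
    rw [← Units.val_mul, mul_inv_cancel] at this
    simpa using this
  have e := fun j => congrFun h2 j
  fin_cases i
  all_goals first
    | (have := e 0; simp [vz] at this; done)
    | (have := e 1; simp [vz] at this; done)
    | (have := e 2; simp [vz] at this; done)
    | (have := e 3; simp [vz] at this; done)

lemma pt_plane (g : GL (Fin 4) F) (a b c d : Fin 7)
    (h1 : a ≠ b) (h2 : a ≠ c) (h3 : a ≠ d) (h4 : b ≠ c) (h5 : b ≠ d) (h6 : c ≠ d) :
    det4x (pt g.1 a) (pt g.1 b) (pt g.1 c) (pt g.1 d) = 0 ↔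
      ∃ h ∈ h4planes, ({a, b, c, d} : Finset (Fin 7)) ⊆ h := by
  have hg : g.1.det ≠ 0 := ((Matrix.isUnit_iff_isUnit_det _).1 g.isUnit).ne_zero
  rw [det4x_pt]
  rcases vz_plane a b c d h1 h2 h3 h4 h5 h6 with ⟨h, e⟩ | ⟨h, e | e⟩
  · simp only [e, h]; simp
  · simp only [e, h]; simp [hg]
  · simp only [e, h]; simp [hg]

/-- the realization attached to an invertible matrix -/
def PhiF (g : GL (Fin 4) F) : Fin 7 → ℙ F (Fin 4 → F) := fun i => .mk F (pt g.1 i) (pt_ne g i)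

lemma PhiF_real (g : GL (Fin 4) F) : IsConfigReal F h4planes h4lines (PhiF g) := by
  refine ⟨?_, ?_, ?_⟩
  · intro a b hab
    by_contra hne
    obtain ⟨c, d, h2, h3, h4, h5, h6, hn⟩ := vz_pair a b hne
    rw [← pt_plane g a b c d hne h2 h3 h4 h5 h6, ← ne_eq, ← li_iff_det] at hn
    rw [PhiF, PhiF, Projectivization.mk_eq_mk_iff'] at hab
    obtain ⟨t, ht⟩ := hab
    have := (Fintype.linearIndependent_iff.1 hn) ![1, -t, 0, 0] (by
      simp [Fin.sum_univ_succ, ht]) 0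
    simp at this
  · intro a b c h1 h2 h3
    rw [PhiF, PhiF, PhiF, col_iff_li]
    constructor
    · intro h
      by_contra hn
      obtain ⟨d, h4, h5, h6, hn⟩ := vz_notline a b c h1 h2 h3 hn
      rw [← pt_plane g a b c d h1 h2 h4 h3 h5 h6, ← ne_eq, ← li_iff_det] at hn
      apply h
      have := hn.comp ![0, 1, 2] (by decide)
      convert this using 1
      ext i j; fin_cases i <;> rfl
    · intro h hli
      obtain ⟨s, -, t, -, hst⟩ := vz_line a b c h1 h2 h3 h
      have e : pt g.1 c = (s : F) • pt g.1 a + (t : F) • pt g.1 b := by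
        simp only [pt]
        rw [← Matrix.smul_vecMul, ← Matrix.smul_vecMul, ← Matrix.add_vecMul]
        congr 1
        ext j
        simp [hst]
      have := (Fintype.linearIndependent_iff.1 hli) ![(s : F), t, -1] (by
        simp [Fin.sum_univ_three, e]; abel) 2
      simp at this
  · intro a b c d h1 h2 h3 h4 h5 h6
    rw [PhiF, PhiF, PhiF, PhiF, cop_iff]
    exact pt_plane g a b c d h1 h2 h3 h4 h5 h6

lemma Phi_inj (g h : GL (Fin 4) F) (e : PhiF g = PhiF h) : ∃ c : Fˣ,
    h = Units.map (algebraMap F (Matrix (Fin 4) (Fin 4) F)).toMonoidHom c * g := by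
  have key : ∀ i, ∃ c : F, ∀ j, pt (h * g⁻¹).1 i j = c * vz i j := by
    intro i
    have := congrFun e.symm i
    rw [PhiF, PhiF, Projectivization.mk_eq_mk_iff'] at this
    obtain ⟨t, ht⟩ := this
    refine ⟨t, fun j => ?_⟩
    have := congrArg (fun v => Matrix.vecMul v (g⁻¹).1) ht
    simp only [pt, Matrix.smul_vecMul, Matrix.vecMul_vecMul] at this
    rw [← Units.val_mul, ← Units.val_mul, mul_inv_cancel] at this
    have := congrFun this j
    simp only [pt, ← this]
    simp
  choose c hc using key
  set M := (h * g⁻¹).1 with hM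
  have h0 := fun j => hc 0 j
  have h1 := fun j => hc 1 j
  have h2 := fun j => hc 2 j
  have h3 := fun j => hc 3 j
  have h4 := fun j => hc 4 j
  have h5 := fun j => hc 5 j
  have h6 := fun j => hc 6 j
  simp only [pt, Matrix.vecMul, dotProduct, Fin.sum_univ_succ] at h0 h1 h2 h3 h4 h5 h6
  simp [vz, Fin.forall_fin_succ] at h0 h1 h2 h3 h4 h5 h6
  have hMs : M = algebraMap F _ (c 0) := by
    ext i j
    fin_cases i <;> fin_cases j <;> simp [Matrix.algebraMap_matrix_apply] <;> grind
  have hc0 : c 0 ≠ 0 := by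
    intro h0
    have hd := (Matrix.isUnit_iff_isUnit_det _).1 (h * g⁻¹).isUnit
    rw [← hM, hMs, h0] at hd
    simp at hd
  refine ⟨Units.mk0 _ hc0, ?_⟩
  rw [← mul_inv_eq_iff_eq_mul]
  ext1
  exact hMs

lemma Phi_surj (σ : Fin 7 → ℙ F (Fin 4 → F)) (hσ : IsConfigReal F h4planes h4lines σ) :
    ∃ g : GL (Fin 4) F, PhiF g = σ := by
  obtain ⟨hinj, hcol, hcop⟩ := hσ
  set w : Fin 7 → Fin 4 → F := fun i => (σ i).rep with hw
  have wne : ∀ i, w i ≠ 0 := fun i => (σ i).rep_nonzero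
  have hs : ∀ i, σ i = .mk F (w i) (wne i) := fun i => (Projectivization.mk_rep _).symm
  have hli : LinearIndependent F ![w 0, w 1, w 3, w 5] := by
    by_contra h
    rw [← cop_iff_li _ _ _ _ (wne _) (wne _) (wne _) (wne _), ← hs, ← hs, ← hs, ← hs,
      hcop _ _ _ _ (by decide) (by decide) (by decide) (by decide) (by decide) (by decide)] at h
    revert h; decide
  have hpar : ∀ i j, i ≠ j → ∀ t : F, t • w j ≠ w i := by
    intro i j hij t ht
    exact hij (hinj (by rw [hs i, hs j, Projectivization.mk_eq_mk_iff']; exact ⟨t, ht⟩))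
  have hdep3 : ∀ a b c : Fin 7, a ≠ b → a ≠ c → b ≠ c →
      (∃ h ∈ h4lines, ({a, b, c} : Finset (Fin 7)) ⊆ h) →
      ∃ α β : F, α ≠ 0 ∧ β ≠ 0 ∧ w c = α • w a + β • w b := by
    intro a b c hab hac hbc h
    rw [← hcol a b c hab hac hbc, hs, hs, hs, col_iff_li, Fintype.not_linearIndependent_iff] at h
    obtain ⟨f, hf, i, hi⟩ := h
    simp only [Fin.sum_univ_three] at hf
    simp at hf
    have h2 : f 2 ≠ 0 := by
      intro h2
      simp only [h2, zero_smul, add_zero] at hf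
      by_cases h1 : f 1 = 0
      · simp [h1, wne] at hf
        exact hi (by fin_cases i; exacts [hf, h1, h2])
      · refine hpar b a hab.symm (-(f 1)⁻¹ * f 0) ?_
        rw [add_eq_zero_iff_eq_neg] at hf
        rw [mul_smul, hf]; simp [h1]
    have e : w c = (-(f 2)⁻¹ * f 0) • w a + (-(f 2)⁻¹ * f 1) • w b := by
      rw [add_eq_zero_iff_neg_eq] at hf
      rw [mul_smul, mul_smul, ← smul_add, neg_smul, ← smul_neg, hf, smul_smul,
        inv_mul_cancel₀ h2, one_smul]
    refine ⟨_, _, ?_, ?_, e⟩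
    · intro h0; rw [h0, zero_smul, zero_add] at e; exact hpar c b hbc.symm _ e.symm
    · intro h0; rw [h0, zero_smul, add_zero] at e; exact hpar c a hac.symm _ e.symm
  obtain ⟨α, β, hα, hβ, e2⟩ := hdep3 0 1 2 (by decide) (by decide) (by decide) (by decide)
  obtain ⟨γ, δ, hγ, hδ, e4⟩ := hdep3 0 3 4 (by decide) (by decide) (by decide) (by decide)
  -- basis
  have hD : (Matrix.of ![w 0, w 1, w 3, w 5]).det ≠ 0 := by
    rw [det_eq_det4x, ← li_iff_det]; exact hli
  have hspan : ∃ r x y z : F, w 6 = r • w 0 + x • w 1 + y • w 3 + z • w 5 := by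
    have hu : IsUnit (Matrix.of ![w 0, w 1, w 3, w 5]).det := hD.isUnit
    have := Matrix.vecMul_vecMul (w 6) (Matrix.of ![w 0, w 1, w 3, w 5])⁻¹
      (Matrix.of ![w 0, w 1, w 3, w 5])
    rw [Matrix.nonsing_inv_mul _ hu, Matrix.vecMul_one] at this
    set u := Matrix.vecMul (w 6) (Matrix.of ![w 0, w 1, w 3, w 5])⁻¹
    refine ⟨u 0, u 1, u 2, u 3, ?_⟩
    rw [← this]
    ext j
    simp [Matrix.vecMul, dotProduct, Fin.sum_univ_succ]
    ring
  obtain ⟨r, x, y, z, e6⟩ := hspan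
  have hdet := det_eq_det4x (w 0) (w 1) (w 3) (w 5)
  rw [hdet] at hD
  have hq1 : det4x (w 1) (w 3) (w 5) (w 6) = 0 := by
    rw [← cop_iff _ _ _ _ (wne _) (wne _) (wne _) (wne _), ← hs, ← hs, ← hs, ← hs,
      hcop _ _ _ _ (by decide) (by decide) (by decide) (by decide) (by decide) (by decide)]
    decide
  have hq2 : det4x (w 2) (w 4) (w 5) (w 6) = 0 := by
    rw [← cop_iff _ _ _ _ (wne _) (wne _) (wne _) (wne _), ← hs, ← hs, ← hs, ← hs,
      hcop _ _ _ _ (by decide) (by decide) (by decide) (by decide) (by decide) (by decide)]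
    decide
  have hq3 : det4x (w 0) (w 1) (w 3) (w 6) ≠ 0 := by
    rw [ne_eq, ← cop_iff _ _ _ _ (wne _) (wne _) (wne _) (wne _), ← hs, ← hs, ← hs, ← hs,
      hcop _ _ _ _ (by decide) (by decide) (by decide) (by decide) (by decide) (by decide)]
    decide
  have hr : r = 0 := by
    have : det4x (w 1) (w 3) (w 5) (w 6) = -r * det4x (w 0) (w 1) (w 3) (w 5) := by
      rw [e6]; simp only [det4x, det3x, Pi.add_apply, Pi.smul_apply, smul_eq_mul]; ring
    rw [this] at hq1
    simpa [hD] using hq1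
  subst hr
  have hz : z ≠ 0 := by
    have : det4x (w 0) (w 1) (w 3) (w 6) = z * det4x (w 0) (w 1) (w 3) (w 5) := by
      rw [e6]; simp only [det4x, det3x, Pi.add_apply, Pi.smul_apply, smul_eq_mul]; ring
    rintro rfl
    exact hq3 (by rw [this, zero_mul])
  have hxy : α * δ * x + β * γ * y = 0 := by
    have : det4x (w 2) (w 4) (w 5) (w 6) =
        (α * δ * x + β * γ * y) * det4x (w 0) (w 1) (w 3) (w 5) := by
      rw [e6, e2, e4]; simp only [det4x, det3x, Pi.add_apply, Pi.smul_apply, smul_eq_mul]; ring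
    rw [this] at hq2
    simpa [hD] using hq2
  have hx : x ≠ 0 := by
    rintro rfl
    have hy : y = 0 := by simpa [hβ, hγ] using hxy
    subst hy
    simp only [zero_smul, zero_add] at e6
    exact hpar 6 5 (by decide) z e6.symm
  have hy : y = -(α * δ * x) / (β * γ) := by
    field_simp; linear_combination hxy
  set N : Matrix (Fin 4) (Fin 4) F := Matrix.of
    ![w 0, (β / α) • w 1, (-(δ / γ)) • w 3, (z * β / (x * α)) • w 5] with hN
  have hNd : N.det ≠ 0 := by
    have : N.det = (β / α) * (-(δ / γ)) * (z * β / (x * α)) * det4x (w 0) (w 1) (w 3) (w 5) := by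
      rw [hN, det_eq_det4x]
      simp only [det4x, det3x, Pi.smul_apply, smul_eq_mul]; ring
    rw [this]
    have h1 : β / α ≠ 0 := div_ne_zero hβ hα
    have h2 : -(δ / γ) ≠ 0 := neg_ne_zero.2 (div_ne_zero hδ hγ)
    have h3 : z * β / (x * α) ≠ 0 := div_ne_zero (mul_ne_zero hz hβ) (mul_ne_zero hx hα)
    exact mul_ne_zero (mul_ne_zero (mul_ne_zero h1 h2) h3) hD
  refine ⟨Matrix.GeneralLinearGroup.mkOfDetNeZero N hNd, ?_⟩
  funext i
  rw [hs i, PhiF, Projectivization.mk_eq_mk_iff']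
  change ∃ a : F, a • w i = pt N i
  refine ⟨![1, β / α, 1 / α, -(δ / γ), 1 / γ, z * β / (x * α), β / (x * α)] i, ?_⟩
  ext j
  fin_cases i <;>
    simp [pt, vz, Matrix.vecMul, dotProduct, Fin.sum_univ_succ, hN, e2, e4, e6, hy] <;>
    field_simp <;> try ring
end

/-- `A_{h₄}(4,q) = |PGL₄(F_q)|`. -/
theorem Ah4_formula (F : Type) [Field F] [Fintype F] (q : ℕ) (hq : q = Fintype.card F) :
    Nat.card {σ : Fin 7 → ℙ F (Fin 4 → F) // IsConfigReal F h4planes h4lines σ} =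
      Nat.card (GL (Fin 4) F) / (q - 1) := by
  choose G hG using fun s : {σ : Fin 7 → ℙ F (Fin 4 → F) // IsConfigReal F h4planes h4lines σ} =>
    Phi_surj s.1 s.2
  let sc : Fˣ →* GL (Fin 4) F :=
    Units.map (algebraMap F (Matrix (Fin 4) (Fin 4) F)).toMonoidHom
  have hsc : ∀ c g, PhiF (sc c * g) = PhiF g := by
    intro c g
    funext i
    rw [PhiF, PhiF, Projectivization.mk_eq_mk_iff']
    refine ⟨c, ?_⟩
    have : (sc c * g).1 = (c : F) • g.1 := by
      rw [Units.val_mul, Algebra.smul_def]; rfl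
    simp only [pt, this, Matrix.vecMul_smul]
  have hb : Function.Bijective (fun p : {σ : Fin 7 → ℙ F (Fin 4 → F) //
      IsConfigReal F h4planes h4lines σ} × Fˣ => sc p.2 * G p.1) := by
    constructor
    · rintro ⟨s, c⟩ ⟨t, d⟩ h
      simp only at h
      have hst : s = t := by
        apply Subtype.ext
        rw [← hG s, ← hG t, ← hsc c (G s), h, hsc d (G t)]
      subst hst
      have h2 : sc c = sc d := mul_right_cancel h
      have h3 : c = d := by
        refine Units.map_injective ?_ h2
        exact (algebraMap F (Matrix (Fin 4) (Fin 4) F)).injective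
      rw [h3]
    · intro g
      obtain ⟨c, hc⟩ := Phi_inj (G ⟨PhiF g, PhiF_real g⟩) g (hG _)
      exact ⟨(⟨PhiF g, PhiF_real g⟩, c), hc.symm⟩
  have hcard := Nat.card_congr (Equiv.ofBijective _ hb)
  have hq1 : Nat.card Fˣ = q - 1 := by
    rw [hq, Nat.card_units, Nat.card_eq_fintype_card]
  rw [Nat.card_prod, hq1] at hcard
  have hpos : 0 < q - 1 := by
    rw [← hq1]; exact Nat.card_pos
  rw [← hcard, Nat.mul_div_cancel _ hpos]
end

section
/- For every prime power q, the number of strong realizations of the hyperfiguration h_5 in P^3(F_q) is A_{h_5}(4,q) = (q^2 + q + 1)(q^2 + 1)(q + 1)^2 (q − 1)^2 (q − 2) · q^6. -/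
open scoped LinearAlgebra.Projectivization

/-- Which of the two lines an index belongs to. -/
def side (i : Fin 7) : Bool := decide (i.val < 4)

lemma lines_iff : ∀ a b c : Fin 7, a ≠ b → a ≠ c → b ≠ c →
    ((∃ l ∈ h5lines, ({a, b, c} : Finset (Fin 7)) ⊆ l) ↔ (side a = side b ∧ side a = side c)) := by
  decide +kernel

lemma planes_iff : ∀ a b c d : Fin 7, a ≠ b → a ≠ c → a ≠ d → b ≠ c → b ≠ d → c ≠ d →
    ((∃ h ∈ h5planes, ({a, b, c, d} : Finset (Fin 7)) ⊆ h) ↔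
      ¬ ((side a = side b ∧ side c = side d ∧ side a ≠ side c) ∨
        (side a = side c ∧ side b = side d ∧ side a ≠ side b) ∨
        (side a = side d ∧ side b = side c ∧ side a ≠ side b))) := by
  decide +kernel

section
set_option linter.unusedVariables false
variable {F : Type} [Field F]

lemma pair_rank {x y : ℙ F (Fin 4 → F)} (hxy : x ≠ y) :
    Module.finrank F ↥(x.submodule ⊔ y.submodule) = 2 := by
  have h := Submodule.finrank_sup_add_finrank_inf_eq x.submodule y.submodule
  rw [x.finrank_submodule, y.finrank_submodule] at h
  have h1 : Module.finrank F ↥(x.submodule ⊓ y.submodule) ≠ 1 := by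
    intro h1
    apply hxy
    apply Projectivization.submodule_injective
    rw [← Submodule.eq_of_le_of_finrank_eq (inf_le_left : x.submodule ⊓ y.submodule ≤ _)
      (by rw [h1, x.finrank_submodule])]
    exact Submodule.eq_of_le_of_finrank_eq (inf_le_right : x.submodule ⊓ y.submodule ≤ _)
      (by rw [h1, y.finrank_submodule])
  have h2 : Module.finrank F ↥(x.submodule ⊓ y.submodule) ≤ 1 := by
    rw [← x.finrank_submodule]
    exact Submodule.finrank_mono inf_le_left
  omega

lemma pair_sup {x y : ℙ F (Fin 4 → F)} (hxy : x ≠ y) {P : Submodule F (Fin 4 → F)}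
    (hP : Module.finrank F P = 2) (hx : x.submodule ≤ P) (hy : y.submodule ≤ P) :
    x.submodule ⊔ y.submodule = P :=
  Submodule.eq_of_le_of_finrank_eq (sup_le hx hy) (by rw [pair_rank hxy, hP])

lemma disj {σ : Fin 7 → ℙ F (Fin 4 → F)} {P : Bool → Submodule F (Fin 4 → F)}
  (hP : ∀ s, Module.finrank F (P s) = 2) (hd : Disjoint (P true) (P false))
  (hle : ∀ i, (σ i).submodule ≤ P (side i))
  (hne : ∀ i j, i ≠ j → side i = side j → σ i ≠ σ j)
    {s t : Bool} (h : s ≠ t) : Disjoint (P s) (P t) := by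
  cases s <;> cases t <;> simp_all [disjoint_comm]

lemma sup_le_of {σ : Fin 7 → ℙ F (Fin 4 → F)} {P : Bool → Submodule F (Fin 4 → F)}
  (hP : ∀ s, Module.finrank F (P s) = 2) (hd : Disjoint (P true) (P false))
  (hle : ∀ i, (σ i).submodule ≤ P (side i))
  (hne : ∀ i j, i ≠ j → side i = side j → σ i ≠ σ j)
    {i j : Fin 7} (hij : i ≠ j) (hs : side i = side j) {W : Submodule F (Fin 4 → F)}
    (hi : (σ i).submodule ≤ W) (hj : (σ j).submodule ≤ W) : P (side i) ≤ W := by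
  rw [← pair_sup (hne i j hij hs) (hP (side i)) (hle i) (hs ▸ hle j)]
  exact sup_le hi hj

lemma low3 {σ : Fin 7 → ℙ F (Fin 4 → F)} {P : Bool → Submodule F (Fin 4 → F)}
  (hP : ∀ s, Module.finrank F (P s) = 2) (hd : Disjoint (P true) (P false))
  (hle : ∀ i, (σ i).submodule ≤ P (side i))
  (hne : ∀ i j, i ≠ j → side i = side j → σ i ≠ σ j)
    {i j k : Fin 7} (hij : i ≠ j) (hs : side i = side j) (hk : side i ≠ side k)
    {W : Submodule F (Fin 4 → F)}
    (hi : (σ i).submodule ≤ W) (hj : (σ j).submodule ≤ W) (hkW : (σ k).submodule ≤ W) :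
    3 ≤ Module.finrank F W := by
  have h1 := sup_le_of hP hd hle hne hij hs hi hj
  have h2 : Module.finrank F ↥(P (side i) ⊔ (σ k).submodule) = 3 := by
    have h := Submodule.finrank_sup_add_finrank_inf_eq (P (side i)) (σ k).submodule
    rw [((disj hP hd hle hne hk).mono_right (hle k)).eq_bot, hP, (σ k).finrank_submodule] at h
    simpa using h
  rw [← h2]
  exact Submodule.finrank_mono (sup_le h1 hkW)

lemma low4 {σ : Fin 7 → ℙ F (Fin 4 → F)} {P : Bool → Submodule F (Fin 4 → F)}
  (hP : ∀ s, Module.finrank F (P s) = 2) (hd : Disjoint (P true) (P false))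
  (hle : ∀ i, (σ i).submodule ≤ P (side i))
  (hne : ∀ i j, i ≠ j → side i = side j → σ i ≠ σ j)
    {i j k l : Fin 7} (hij : i ≠ j) (hkl : k ≠ l) (hs : side i = side j)
    (hs' : side k = side l) (hk : side i ≠ side k)
    {W : Submodule F (Fin 4 → F)}
    (hi : (σ i).submodule ≤ W) (hj : (σ j).submodule ≤ W) (hkW : (σ k).submodule ≤ W)
    (hlW : (σ l).submodule ≤ W) :
    4 ≤ Module.finrank F W := by
  have h1 := sup_le_of hP hd hle hne hij hs hi hj
  have h3 := sup_le_of hP hd hle hne hkl hs' hkW hlW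
  have h2 : Module.finrank F ↥(P (side i) ⊔ P (side k)) = 4 := by
    have h := Submodule.finrank_sup_add_finrank_inf_eq (P (side i)) (P (side k))
    rw [((disj hP hd hle hne hk)).eq_bot, hP, hP] at h
    simpa using h
  exact h2.symm.le.trans (Submodule.finrank_mono (sup_le h1 h3))

lemma up3 {σ : Fin 7 → ℙ F (Fin 4 → F)} {P : Bool → Submodule F (Fin 4 → F)}
  (hP : ∀ s, Module.finrank F (P s) = 2) (hd : Disjoint (P true) (P false))
  (hle : ∀ i, (σ i).submodule ≤ P (side i))
  (hne : ∀ i j, i ≠ j → side i = side j → σ i ≠ σ j)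
    {i : Fin 7} (s : Bool) {W : Submodule F (Fin 4 → F)}
    (h : W ≤ P s ⊔ (σ i).submodule) : Module.finrank F W ≤ 3 := by
  have h1 := Submodule.finrank_mono h
  have h2 := Submodule.finrank_sup_add_finrank_inf_eq (P s) (σ i).submodule
  rw [hP, (σ i).finrank_submodule] at h2
  omega

lemma real_of {σ : Fin 7 → ℙ F (Fin 4 → F)} {P : Bool → Submodule F (Fin 4 → F)}
  (hP : ∀ s, Module.finrank F (P s) = 2) (hd : Disjoint (P true) (P false))
  (hle : ∀ i, (σ i).submodule ≤ P (side i))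
  (hne : ∀ i j, i ≠ j → side i = side j → σ i ≠ σ j)
    : IsConfigReal F h5planes h5lines σ := by
  refine ⟨?_, ?_, ?_⟩
  · intro i j hij
    by_contra hn
    by_cases hs : side i = side j
    · exact hne i j hn hs hij
    · have h := (disj hP hd hle hne hs).mono (hle i) (hle j)
      rw [hij, disjoint_self] at h
      have := (σ j).finrank_submodule
      rw [h] at this
      simp at this
  · intro a b c hab hac hbc
    rw [lines_iff a b c hab hac hbc]
    unfold Collinear3
    have ha : (σ a).submodule ≤ (σ a).submodule ⊔ (σ b).submodule ⊔ (σ c).submodule :=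
      le_sup_of_le_left le_sup_left
    have hb : (σ b).submodule ≤ (σ a).submodule ⊔ (σ b).submodule ⊔ (σ c).submodule :=
      le_sup_of_le_left le_sup_right
    have hc : (σ c).submodule ≤ (σ a).submodule ⊔ (σ b).submodule ⊔ (σ c).submodule :=
      le_sup_right
    constructor
    · intro h
      by_contra hn
      have : 3 ≤ Module.finrank F ↥((σ a).submodule ⊔ (σ b).submodule ⊔ (σ c).submodule) := by
        by_cases h1 : side a = side b
        · exact low3 hP hd hle hne hab h1 (by tauto) ha hb hc
        · by_cases h2 : side a = side c
          · exact low3 hP hd hle hne hac h2 h1 ha hc hb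
          · have h3 : side b = side c := by
              revert h1 h2; cases side a <;> cases side b <;> cases side c <;> simp
            exact low3 hP hd hle hne hbc h3 (Ne.symm h1) hb hc ha
      omega
    · rintro ⟨h1, h2⟩
      rw [← hP (side a)]
      exact Submodule.finrank_mono (sup_le (sup_le (hle a) (h1 ▸ hle b)) (h2 ▸ hle c))
  · intro a b c d hab hac had hbc hbd hcd
    rw [planes_iff a b c d hab hac had hbc hbd hcd]
    unfold Coplanar4
    have ha : (σ a).submodule ≤
      (σ a).submodule ⊔ (σ b).submodule ⊔ (σ c).submodule ⊔ (σ d).submodule :=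
      le_sup_of_le_left (le_sup_of_le_left le_sup_left)
    have hb : (σ b).submodule ≤
      (σ a).submodule ⊔ (σ b).submodule ⊔ (σ c).submodule ⊔ (σ d).submodule :=
      le_sup_of_le_left (le_sup_of_le_left le_sup_right)
    have hc : (σ c).submodule ≤
      (σ a).submodule ⊔ (σ b).submodule ⊔ (σ c).submodule ⊔ (σ d).submodule :=
      le_sup_of_le_left le_sup_right
    have hdd : (σ d).submodule ≤
      (σ a).submodule ⊔ (σ b).submodule ⊔ (σ c).submodule ⊔ (σ d).submodule :=
      le_sup_right
    constructor
    · intro h hn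
      have : 4 ≤ Module.finrank F ↥((σ a).submodule ⊔ (σ b).submodule ⊔ (σ c).submodule ⊔
          (σ d).submodule) := by
        rcases hn with ⟨h1, h2, h3⟩ | ⟨h1, h2, h3⟩ | ⟨h1, h2, h3⟩
        · exact low4 hP hd hle hne hab hcd h1 h2 h3 ha hb hc hdd
        · exact low4 hP hd hle hne hac hbd h1 h2 h3 ha hc hb hdd
        · exact low4 hP hd hle hne had hbc h1 h2 h3 ha hdd hb hc
      omega
    · intro h
      have key : (side a = side b ∧ side a = side c) ∨ (side a = side b ∧ side a = side d) ∨
          (side a = side c ∧ side a = side d) ∨ (side b = side c ∧ side b = side d) := by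
        revert h
        cases side a <;> cases side b <;> cases side c <;> cases side d <;> simp
      rcases key with ⟨h1, h2⟩ | ⟨h1, h2⟩ | ⟨h1, h2⟩ | ⟨h1, h2⟩
      · exact up3 hP hd hle hne (i := d) (side a) (sup_le (sup_le (sup_le
          (le_sup_of_le_left (hle a)) (le_sup_of_le_left (h1 ▸ hle b)))
          (le_sup_of_le_left (h2 ▸ hle c))) le_sup_right)
      · exact up3 hP hd hle hne (i := c) (side a) (sup_le (sup_le (sup_le
          (le_sup_of_le_left (hle a)) (le_sup_of_le_left (h1 ▸ hle b)))
          le_sup_right) (le_sup_of_le_left (h2 ▸ hle d)))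
      · exact up3 hP hd hle hne (i := b) (side a) (sup_le (sup_le (sup_le
          (le_sup_of_le_left (hle a)) le_sup_right) (le_sup_of_le_left (h1 ▸ hle c)))
          (le_sup_of_le_left (h2 ▸ hle d)))
      · exact up3 hP hd hle hne (i := a) (side b) (sup_le (sup_le (sup_le
          le_sup_right (le_sup_of_le_left (hle b))) (le_sup_of_le_left (h1 ▸ hle c)))
          (le_sup_of_le_left (h2 ▸ hle d)))

lemma real_data {σ : Fin 7 → ℙ F (Fin 4 → F)} (h : IsConfigReal F h5planes h5lines σ) :
    (σ 2).submodule ≤ (σ 0).submodule ⊔ (σ 1).submodule ∧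
    (σ 3).submodule ≤ (σ 0).submodule ⊔ (σ 1).submodule ∧
    (σ 6).submodule ≤ (σ 4).submodule ⊔ (σ 5).submodule ∧
    (σ 0).submodule ⊔ (σ 1).submodule ⊔ (σ 4).submodule ⊔ (σ 5).submodule = ⊤ := by
  obtain ⟨hi, h3, h4⟩ := h
  have key : ∀ a b c : Fin 7, a ≠ b → a ≠ c → b ≠ c → side a = side b ∧ side a = side c →
      (σ c).submodule ≤ (σ a).submodule ⊔ (σ b).submodule := by
    intro a b c hab hac hbc hs
    have h := (h3 a b c hab hac hbc).2 ((lines_iff a b c hab hac hbc).2 hs)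
    have h2 : (σ a).submodule ⊔ (σ b).submodule =
        (σ a).submodule ⊔ (σ b).submodule ⊔ (σ c).submodule :=
      Submodule.eq_of_le_of_finrank_le le_sup_left
        (by rw [pair_rank (hi.ne hab)]; exact h)
    rw [h2]; exact le_sup_right
  refine ⟨key 0 1 2 (by decide) (by decide) (by decide) (by decide),
    key 0 1 3 (by decide) (by decide) (by decide) (by decide),
    key 4 5 6 (by decide) (by decide) (by decide) (by decide), ?_⟩
  have h := (not_congr (h4 0 1 4 5 (by decide) (by decide) (by decide) (by decide) (by decide)
    (by decide))).2 (by decide +kernel)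
  unfold Coplanar4 at h
  apply Submodule.eq_top_of_finrank_eq
  have h5 := Submodule.finrank_le
    ((σ 0).submodule ⊔ (σ 1).submodule ⊔ (σ 4).submodule ⊔ (σ 5).submodule)
  simp only [Module.finrank_fin_fun] at h5 ⊢
  omega

/-- Coefficient rows of the seven points in the basis `v`. -/
def cA : Fin 7 → F := ![1, 0, 1, 1, 0, 0, 0]
/-- Second coefficients. -/
def cB (b : F) : Fin 7 → F := ![0, 1, 1, b, 0, 0, 0]
/-- Third coefficients. -/
def cC : Fin 7 → F := ![0, 0, 0, 0, 1, 0, 1]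
/-- Fourth coefficients. -/
def cD : Fin 7 → F := ![0, 0, 0, 0, 0, 1, 1]

/-- The seven vectors attached to a basis `v` and a parameter `b`. -/
def uvec (v : Fin 4 → Fin 4 → F) (b : F) (i : Fin 7) : Fin 4 → F :=
  cA (F := F) i • v 0 + cB b i • v 1 + cC (F := F) i • v 2 + cD (F := F) i • v 3

lemma coef {v : Fin 4 → Fin 4 → F} (hv : LinearIndependent F v) {a b c d a' b' c' d' : F}
    (h : a • v 0 + b • v 1 + c • v 2 + d • v 3 = a' • v 0 + b' • v 1 + c' • v 2 + d' • v 3) :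
    a = a' ∧ b = b' ∧ c = c' ∧ d = d' := by
  rw [Fintype.linearIndependent_iff] at hv
  have h2 := hv ![a - a', b - b', c - c', d - d'] (by
    simp only [Fin.sum_univ_four, Matrix.cons_val]
    rw [← sub_eq_zero] at h
    rw [← h]; module)
  exact ⟨sub_eq_zero.1 (h2 0), sub_eq_zero.1 (h2 1), sub_eq_zero.1 (h2 2), sub_eq_zero.1 (h2 3)⟩

lemma uvec_smul {v : Fin 4 → Fin 4 → F} (hv : LinearIndependent F v) {b : F} {c : F} {i j : Fin 7}
    (h : c • uvec v b i = uvec v b j) :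
    c * cA i = cA j ∧ c * cB b i = cB b j ∧ c * cC i = cC j ∧ c * cD i = cD j := by
  apply coef hv
  change _ = uvec v b j
  rw [← h]
  unfold uvec
  module

lemma uvec_ne {v : Fin 4 → Fin 4 → F} (hv : LinearIndependent F v) (b : F) (i : Fin 7) :
    uvec v b i ≠ 0 := by
  intro h
  have := coef hv (a' := 0) (b' := 0) (c' := 0) (d' := 0) (h.trans (by simp))
  revert this
  fin_cases i <;> simp [cA, cB, cC, cD]

/-- `σ` is the configuration attached to `(v, b)`. -/
def RelCfg (v : Fin 4 → Fin 4 → F) (b : F) (σ : Fin 7 → ℙ F (Fin 4 → F)) : Prop :=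
  ∀ i, (σ i).submodule = Submodule.span F {uvec v b i}

lemma rel_real {v : Fin 4 → Fin 4 → F} (hv : LinearIndependent F v) {b : F} (hb0 : b ≠ 0)
    (hb1 : b ≠ 1) {σ : Fin 7 → ℙ F (Fin 4 → F)} (h : RelCfg v b σ) :
    IsConfigReal F h5planes h5lines σ := by
  have r0 : LinearIndependent F ![v 0, v 1] := by
    have := hv.comp ![0, 1] (by decide)
    convert this using 1
    ext i : 1; fin_cases i <;> rfl
  have r1 : LinearIndependent F ![v 2, v 3] := by
    have := hv.comp ![2, 3] (by decide)
    convert this using 1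
    ext i : 1; fin_cases i <;> rfl
  refine real_of (P := fun s => if s then Submodule.span F (v '' {0, 1})
    else Submodule.span F (v '' {2, 3})) ?_ ?_ ?_ ?_
  · intro s
    cases s
    · have := finrank_span_eq_card r1
      rw [Matrix.range_cons, Matrix.range_cons, Matrix.range_empty, Set.union_empty,
        Set.singleton_union, ← Set.image_pair] at this
      simpa using this
    · have := finrank_span_eq_card r0
      rw [Matrix.range_cons, Matrix.range_cons, Matrix.range_empty, Set.union_empty,
        Set.singleton_union, ← Set.image_pair] at this
      simpa using this
  · simpa using hv.disjoint_span_image (s := {0, 1}) (t := {2, 3}) (by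
      rw [Set.disjoint_iff]; intro x; fin_cases x <;> simp)
  · intro i
    rw [h i, Submodule.span_singleton_le_iff_mem, Set.image_pair, Set.image_pair]
    unfold uvec
    fin_cases i <;> simp only [side, cA, cB, cC, cD] <;> norm_num <;>
      rw [Submodule.mem_span_pair]
    · exact ⟨1, 0, by module⟩
    · exact ⟨0, 1, by module⟩
    · exact ⟨1, 1, by module⟩
    · exact ⟨1, b, by module⟩
    · exact ⟨1, 0, by module⟩
    · exact ⟨0, 1, by module⟩
    · exact ⟨1, 1, by module⟩
  · intro i j hij hs he
    have h1 : Submodule.span F {uvec v b i} = Submodule.span F {uvec v b j} := by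
      rw [← h i, ← h j, he]
    obtain ⟨c, hc⟩ := Submodule.span_singleton_eq_span_singleton.1 h1
    have := uvec_smul hv (c := (c : F)) hc
    have hc0 : (c : F) ≠ 0 := c.ne_zero
    generalize (c : F) = e at this hc0
    revert this hij
    clear h he h1 hc hs
    fin_cases i <;> fin_cases j <;> simp [cA, cB, cC, cD] <;> grind

lemma exists_sigma {v : Fin 4 → Fin 4 → F} (hv : LinearIndependent F v) (b : F) :
    ∃ σ, RelCfg v b σ :=
  ⟨fun i => Projectivization.mk F (uvec v b i) (uvec_ne hv b i), fun _ =>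
    Projectivization.submodule_mk _ _⟩

lemma rel_unique {v : Fin 4 → Fin 4 → F} {b : F} {σ τ : Fin 7 → ℙ F (Fin 4 → F)}
    (h : RelCfg v b σ) (h' : RelCfg v b τ) : σ = τ :=
  funext fun i => Projectivization.submodule_injective ((h i).trans (h' i).symm)

lemma span_smul' {c : F} (hc : c ≠ 0) (x : Fin 4 → F) :
    Submodule.span F {c • x} = Submodule.span F {x} :=
  Submodule.span_singleton_smul_eq (IsUnit.mk0 c hc) x

lemma mem_sup' {x y : Fin 4 → F} {z : ℙ F (Fin 4 → F)}
    (h : z.submodule ≤ Submodule.span F {x} ⊔ Submodule.span F {y}) :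
    ∃ a b : F, z.submodule = Submodule.span F {a • x + b • y} := by
  have : z.rep ∈ Submodule.span F {x} ⊔ Submodule.span F {y} :=
    h (by rw [z.submodule_eq]; exact Submodule.mem_span_singleton_self _)
  rw [← Submodule.span_union, Set.singleton_union, Submodule.mem_span_pair] at this
  obtain ⟨a, b, hab⟩ := this
  exact ⟨a, b, by rw [z.submodule_eq, hab]⟩

lemma half {x y z : ℙ F (Fin 4 → F)} (hz : z.submodule ≤ x.submodule ⊔ y.submodule)
    (hx : z ≠ x) (hy : z ≠ y) : ∃ v w : Fin 4 → F, x.submodule = Submodule.span F {v} ∧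
      y.submodule = Submodule.span F {w} ∧ z.submodule = Submodule.span F {v + w} := by
  rw [x.submodule_eq, y.submodule_eq] at hz
  obtain ⟨a, b, h⟩ := mem_sup' hz
  have hz0 : z.submodule ≠ ⊥ := by
    intro h0
    have := z.finrank_submodule
    rw [h0] at this; simp at this
  have ha : a ≠ 0 := by
    rintro rfl
    by_cases hb : b = 0
    · subst hb; simp at h; exact hz0 h
    · apply hy; apply Projectivization.submodule_injective
      rw [h, y.submodule_eq, zero_smul, zero_add, span_smul' hb]
  have hb : b ≠ 0 := by
    rintro rfl
    apply hx; apply Projectivization.submodule_injective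
    rw [h, x.submodule_eq, zero_smul, add_zero, span_smul' ha]
  exact ⟨a • x.rep, b • y.rep, by rw [span_smul' ha, x.submodule_eq],
    by rw [span_smul' hb, y.submodule_eq], h⟩

lemma third {v w : Fin 4 → F} {z : ℙ F (Fin 4 → F)}
    (hz : z.submodule ≤ Submodule.span F {v} ⊔ Submodule.span F {w})
    (hv : z.submodule ≠ Submodule.span F {v}) (hw : z.submodule ≠ Submodule.span F {w})
    (hvw : z.submodule ≠ Submodule.span F {v + w}) :
    ∃ b : F, b ≠ 0 ∧ b ≠ 1 ∧ z.submodule = Submodule.span F {v + b • w} := by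
  obtain ⟨a, b, h⟩ := mem_sup' hz
  have hz0 : z.submodule ≠ ⊥ := by
    intro h0
    have := z.finrank_submodule
    rw [h0] at this; simp at this
  have ha : a ≠ 0 := by
    rintro rfl
    by_cases hb : b = 0
    · subst hb; simp at h; exact hz0 h
    · apply hw
      rw [h, zero_smul, zero_add, span_smul' hb]
  have h2 : z.submodule = Submodule.span F {v + (a⁻¹ * b) • w} := by
    rw [h, ← span_smul' ha (v + (a⁻¹ * b) • w), smul_add, smul_smul, mul_inv_cancel_left₀ ha]
  refine ⟨a⁻¹ * b, ?_, ?_, h2⟩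
  · intro h0; rw [h0] at h2; apply hv; simpa using h2
  · intro h0; rw [h0] at h2; apply hvw; simpa using h2

lemma exists_basis {σ : Fin 7 → ℙ F (Fin 4 → F)} (h : IsConfigReal F h5planes h5lines σ) :
    ∃ v : Fin 4 → Fin 4 → F, ∃ b : F, LinearIndependent F v ∧ (b ≠ 0 ∧ b ≠ 1) ∧ RelCfg v b σ := by
  obtain ⟨h2, h3, h6, htop⟩ := real_data h
  have hi := h.1
  have hn : ∀ i j, i ≠ j → (σ i).submodule ≠ (σ j).submodule := fun i j hij he =>
    hi.ne hij (Projectivization.submodule_injective he)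
  obtain ⟨v0, v1, e0, e1, e2⟩ := half h2 (hi.ne (by decide)) (hi.ne (by decide))
  obtain ⟨v2, v3, e4, e5, e6⟩ := half h6 (hi.ne (by decide)) (hi.ne (by decide))
  rw [e0, e1] at h3
  obtain ⟨b, hb0, hb1, e3⟩ := third h3 (e0 ▸ hn 3 0 (by decide)) (e1 ▸ hn 3 1 (by decide))
    (e2 ▸ hn 3 2 (by decide))
  refine ⟨![v0, v1, v2, v3], b, ?_, ⟨hb0, hb1⟩, ?_⟩
  · apply linearIndependent_of_top_le_span_of_card_eq_finrank
    · rw [← htop, e0, e1, e4, e5]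
      refine sup_le (sup_le (sup_le ?_ ?_) ?_) ?_ <;>
        rw [Submodule.span_singleton_le_iff_mem] <;> apply Submodule.subset_span
      · exact ⟨0, rfl⟩
      · exact ⟨1, rfl⟩
      · exact ⟨2, rfl⟩
      · exact ⟨3, rfl⟩
    · simp
  · intro i
    fin_cases i <;> simp [uvec, cA, cB, cC, cD] <;> assumption

/-- Scaling the two halves of a basis. -/
def scl (l m : Fˣ) (v : Fin 4 → Fin 4 → F) : Fin 4 → Fin 4 → F :=
  (![l, l, m, m] : Fin 4 → Fˣ) • v

lemma scl_indep (l m : Fˣ) {v : Fin 4 → Fin 4 → F} (hv : LinearIndependent F v) :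
    LinearIndependent F (scl l m v) := hv.units_smul _

lemma scl_rel (l m : Fˣ) {v : Fin 4 → Fin 4 → F} {b : F} {σ : Fin 7 → ℙ F (Fin 4 → F)}
    (h : RelCfg v b σ) : RelCfg (scl l m v) b σ := by
  intro i
  rw [h i, Submodule.span_singleton_eq_span_singleton]
  have e0 : scl l m v 0 = (l : F) • v 0 := rfl
  have e1 : scl l m v 1 = (l : F) • v 1 := rfl
  have e2 : scl l m v 2 = (m : F) • v 2 := rfl
  have e3 : scl l m v 3 = (m : F) • v 3 := rfl
  refine ⟨if side i then l else m, ?_⟩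
  unfold uvec
  rw [e0, e1, e2, e3]
  fin_cases i <;> simp [side, cA, cB, cC, cD, Units.smul_def] <;> module

lemma rel_fibre {v w : Fin 4 → Fin 4 → F} (hv : LinearIndependent F v) {b c : F}
    {σ : Fin 7 → ℙ F (Fin 4 → F)} (h : RelCfg v b σ) (h' : RelCfg w c σ) :
    c = b ∧ ∃ l m : Fˣ, w = scl l m v := by
  have key : ∀ i, ∃ t : Fˣ, t • uvec v b i = uvec w c i := fun i =>
    Submodule.span_singleton_eq_span_singleton.1 ((h i).symm.trans (h' i))
  choose t ht using key
  have h0 := ht 0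
  have h1 := ht 1
  have h2 := ht 2
  have h3 := ht 3
  have h4 := ht 4
  have h5 := ht 5
  have h6 := ht 6
  simp [uvec, cA, cB, cC, cD, Units.smul_def] at h0 h1 h2 h3 h4 h5 h6
  rw [← h0, ← h1] at h2 h3
  rw [← h4, ← h5] at h6
  obtain ⟨p1, p2, -, -⟩ := coef hv (a := t 2) (b := t 2) (c := 0) (d := 0)
    (a' := t 0) (b' := t 1) (c' := 0) (d' := 0) (by linear_combination (exp := 1) h2)
  obtain ⟨p3, p4, -, -⟩ := coef hv (a := t 3) (b := t 3 * b) (c := 0) (d := 0)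
    (a' := t 0) (b' := c * t 1) (c' := 0) (d' := 0) (by
      have := h3
      simp only [smul_smul] at this
      linear_combination (exp := 1) this)
  obtain ⟨-, -, p5, p6⟩ := coef hv (a := 0) (b := 0) (c := t 6) (d := t 6)
    (a' := 0) (b' := 0) (c' := t 4) (d' := t 5) (by linear_combination (exp := 1) h6)
  refine ⟨?_, t 0, t 4, ?_⟩
  · have : (t 1 : F) ≠ 0 := (t 1).ne_zero
    apply mul_right_cancel₀ this
    rw [← p4, p3, ← p1, p2, mul_comm]
  · ext i : 1
    fin_cases i
    · exact h0.symm
    · change w 1 = (t 0 : F) • v 1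
      rw [← h1, ← p1, p2]
    · exact h4.symm
    · change w 3 = (t 4 : F) • v 3
      rw [← h5, ← p5, p6]

lemma scl_inj {v : Fin 4 → Fin 4 → F} (hv : LinearIndependent F v) {l m l' m' : Fˣ}
    (h : scl l m v = scl l' m' v) : l = l' ∧ m = m' := by
  have e0 : (l : F) • v 0 = (l' : F) • v 0 := congrFun h 0
  have e2 : (m : F) • v 2 = (m' : F) • v 2 := congrFun h 2
  exact ⟨Units.ext (smul_left_injective F (hv.ne_zero 0) e0),
    Units.ext (smul_left_injective F (hv.ne_zero 2) e2)⟩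

variable (F) in
lemma count : Nat.card ({σ : Fin 7 → ℙ F (Fin 4 → F) // IsConfigReal F h5planes h5lines σ} ×
      (Fˣ × Fˣ)) =
    Nat.card ({v : Fin 4 → Fin 4 → F // LinearIndependent F v} × {b : F // b ≠ 0 ∧ b ≠ 1}) := by
  choose V B hV hB hR using fun σ : {σ : Fin 7 → ℙ F (Fin 4 → F) //
    IsConfigReal F h5planes h5lines σ} => exists_basis σ.2
  refine Nat.card_eq_of_bijective
    (fun p => (⟨scl p.2.1 p.2.2 (V p.1), scl_indep _ _ (hV p.1)⟩, ⟨B p.1, hB p.1⟩)) ⟨?_, ?_⟩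
  · rintro ⟨σ, l, m⟩ ⟨τ, l', m'⟩ h
    simp only [Prod.mk.injEq, Subtype.mk.injEq] at h
    obtain ⟨h1, h2⟩ := h
    have a := scl_rel l m (hR σ)
    have a' := scl_rel l' m' (hR τ)
    rw [h1, h2] at a
    obtain rfl : σ = τ := Subtype.ext (rel_unique a a')
    obtain ⟨rfl, rfl⟩ := scl_inj (hV σ) h1
    rfl
  · rintro ⟨⟨w, hw⟩, ⟨c, hc⟩⟩
    obtain ⟨σ, hσ⟩ := exists_sigma hw c
    have hr := rel_real hw hc.1 hc.2 hσ
    obtain ⟨rfl, l, m, rfl⟩ := rel_fibre (hV ⟨σ, hr⟩) (hR ⟨σ, hr⟩) hσ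
    exact ⟨(⟨σ, hr⟩, l, m), rfl⟩

end

/-- `A_{h₅}(4,q) = (q^2+q+1)(q^2+1)(q+1)^2(q-1)^2(q-2) q^6`. -/
theorem Ah5_formula (F : Type) [Field F] [Fintype F] (q : ℕ) (hq : q = Fintype.card F) :
    (Nat.card {σ : Fin 7 → ℙ F (Fin 4 → F) // IsConfigReal F h5planes h5lines σ} : ℤ) =
      ((q : ℤ)^2 + q + 1) * ((q : ℤ)^2 + 1) * ((q : ℤ) + 1)^2 * ((q : ℤ) - 1)^2 *
        ((q : ℤ) - 2) * (q : ℤ)^6 := by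
  classical
  have h := count F
  rw [Nat.card_prod, Nat.card_prod, Nat.card_prod,
    card_linearIndependent (K := F) (V := Fin 4 → F) (k := 4) (by simp)] at h
  have hu : Nat.card Fˣ = q - 1 := by rw [Nat.card_units, Nat.card_eq_fintype_card, hq]
  have hb : Nat.card {b : F // b ≠ 0 ∧ b ≠ 1} = q - 2 := by
    rw [Nat.card_eq_fintype_card, Fintype.card_subtype]
    have : (Finset.univ.filter fun b : F => b ≠ 0 ∧ b ≠ 1) = Finset.univ \ {0, 1} := by
      ext b; simp
    rw [this, Finset.card_sdiff_of_subset (Finset.subset_univ _), Finset.card_univ,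
      Finset.card_pair zero_ne_one, hq]
  have hq2 : 2 ≤ q := hq ▸ Fintype.one_lt_card
  rw [hu, hb, ← hq] at h
  simp only [Module.finrank_fin_fun, Fin.prod_univ_four] at h
  change _ = (q ^ 4 - q ^ 0) * (q ^ 4 - q ^ 1) * (q ^ 4 - q ^ 2) * (q ^ 4 - q ^ 3) * (q - 2) at h
  have p0 : q ^ 0 ≤ q ^ 4 := Nat.pow_le_pow_right (by omega) (by omega)
  have p1 : q ^ 1 ≤ q ^ 4 := Nat.pow_le_pow_right (by omega) (by omega)
  have p2 : q ^ 2 ≤ q ^ 4 := Nat.pow_le_pow_right (by omega) (by omega)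
  have p3 : q ^ 3 ≤ q ^ 4 := Nat.pow_le_pow_right (by omega) (by omega)
  have h' := congrArg (Nat.cast : ℕ → ℤ) h
  push_cast [Nat.cast_sub p0, Nat.cast_sub p1, Nat.cast_sub p2, Nat.cast_sub p3,
    Nat.cast_sub hq2, Nat.cast_sub (show 1 ≤ q by omega)] at h'
  have hne : ((q : ℤ) - 1) * ((q : ℤ) - 1) ≠ 0 := by
    have : (q : ℤ) - 1 ≠ 0 := by omega
    exact mul_ne_zero this this
  apply mul_right_cancel₀ hne
  rw [h']
  ring
end
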